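/- arXiv:1604.05020 — 3 statements merged into one kernel-verified Lean document; each statement's English description precedes it below -/
import Mathlib

section
/- If G is a finite simple graph with maximum degree at most 3, with c connected components, and with n₁, n₂, n₃ vertices of degree 1, 2, 3 respectively, then the matching number satisfies α'(G) ≥ (4/9)·n₃ + (1/3)·n₂ + (2/9)·n₁ − (1/9)·c. -/
/-!
Let `α'` be the matching number. By the Tutte–Berge formula there is a set `S` of vertices such
that, if `H` is `G` with all edges meeting `S` deleted and `o` is the number of odd components of
`H` (the vertices of `S` are among them), then `|V| + 2|S| ≤ 2α' + o`. This is deduced from Tutte's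
theorem for the join of `G` with a complete graph on `|V| - 2α' - 2` vertices
(`exists_tutteBerge`).

Since `4n₃ + 3n₂ + 2n₁ ≤ ∑ (1 + deg v)`, it suffices to show that `2 ∑ (1 + deg v) ≤ 18α' + 2c`,
and by the above this follows from `9o ≤ ∑ (7 - 2 deg_G v) + 18|S| + 2c`. Let `f` be the number of
deleted edges. Three facts give that inequality:
* every odd component `C` of `H` has `∑_{v ∈ C} (7 - 2 deg_H v) ≥ 7`, and all summands are positive,
  so `7o ≤ ∑ (7 - 2 deg_H v) = ∑ (7 - 2 deg_G v) + 4f` (`seven_mul_odd_le_sum`);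
* deleting an edge creates at most one new component, so `o ≤ c + f`
  (`card_connectedComponent_deleteEdges_le`);
* `f ≤ 3|S|`, as degrees are at most `3`.
Adding the first to twice the second gives `9o ≤ ∑ (7 - 2 deg_G v) + 6f + 2c`.
-/

/-- The matching number of a simple graph: the maximum number of edges in a matching. -/
noncomputable def matchingNumber {V : Type*} (G : SimpleGraph V) : ℕ :=
  sSup {n | ∃ M : G.Subgraph, M.IsMatching ∧ M.edgeSet.ncard = n}

/-! ### Components under edge deletion -/

/-- If `x` and `y` are connected in `G`, then after deletion of the edge `ab` they are still
connected, or a path between them passes through `ab` in one of the two directions. -/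
lemma reachable_deleteEdge_cases {V : Type*} (G : SimpleGraph V) (a b : V) {x y : V}
    (h : G.Reachable x y) :
    (G.deleteEdges {s(a, b)}).Reachable x y ∨
      ((G.deleteEdges {s(a, b)}).Reachable x a ∧ (G.deleteEdges {s(a, b)}).Reachable b y) ∨
      ((G.deleteEdges {s(a, b)}).Reachable x b ∧ (G.deleteEdges {s(a, b)}).Reachable a y) := by
  obtain ⟨p⟩ := h
  induction p with
  | nil => exact Or.inl (SimpleGraph.Reachable.refl _)
  | @cons x z y hxz p ih =>
    by_cases he : s(x, z) = s(a, b)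
    · rw [Sym2.eq_iff] at he
      have ra := SimpleGraph.Reachable.refl (G := G.deleteEdges {s(a, b)}) a
      have rb := SimpleGraph.Reachable.refl (G := G.deleteEdges {s(a, b)}) b
      rcases he with ⟨rfl, rfl⟩ | ⟨rfl, rfl⟩ <;> tauto
    · have h1 : (G.deleteEdges {s(a, b)}).Reachable x z :=
        SimpleGraph.Adj.reachable (by simpa [SimpleGraph.deleteEdges_adj, hxz] using he)
      rcases ih with h | ⟨h, h'⟩ | ⟨h, h'⟩
      · exact Or.inl (h1.trans h)
      · exact Or.inr (Or.inl ⟨h1.trans h, h'⟩)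
      · exact Or.inr (Or.inr ⟨h1.trans h, h'⟩)

open Classical in
lemma card_connectedComponent_deleteEdge_le {V : Type*} [Finite V] (G : SimpleGraph V)
    (e : Sym2 V) :
    Nat.card (G.deleteEdges {e}).ConnectedComponent ≤ Nat.card G.ConnectedComponent + 1 := by
  induction e with
  | _ a b =>
  rw [← Finite.card_option]
  -- Only the component of `a` can be merged into another one by restoring the edge `ab`.
  let f : (G.deleteEdges {s(a, b)}).ConnectedComponent → Option G.ConnectedComponent := fun C =>
    if C = SimpleGraph.connectedComponentMk _ a then none
    else some (C.map (SimpleGraph.Hom.ofLE (G.deleteEdges_le _)))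
  refine Nat.card_le_card_of_injective f fun C D hCD => ?_
  induction C using SimpleGraph.ConnectedComponent.ind with | _ x =>
  induction D using SimpleGraph.ConnectedComponent.ind with | _ y =>
  simp only [f] at hCD
  split_ifs at hCD with h1 h2 h2
  · rw [h1, h2]
  · simp only [Option.some.injEq, SimpleGraph.ConnectedComponent.map_mk,
      SimpleGraph.Hom.coe_ofLE, id_eq, SimpleGraph.ConnectedComponent.eq] at hCD h1 h2 ⊢
    rcases reachable_deleteEdge_cases G a b hCD with h | ⟨h, -⟩ | ⟨-, h⟩
    · exact h
    · exact absurd h h1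
    · exact absurd h.symm h2

lemma card_connectedComponent_deleteEdges_le {V : Type*} [Finite V] (G : SimpleGraph V)
    (F : Finset (Sym2 V)) :
    Nat.card (G.deleteEdges F).ConnectedComponent ≤ Nat.card G.ConnectedComponent + F.card := by
  classical
  induction F using Finset.induction_on with
  | empty => simp
  | insert e F he ih =>
    have h : G.deleteEdges (insert e F : Finset (Sym2 V)) = (G.deleteEdges F).deleteEdges {e} := by
      rw [SimpleGraph.deleteEdges_deleteEdges]; simp
    rw [h, Finset.card_insert_of_notMem he]
    have := card_connectedComponent_deleteEdge_le (G.deleteEdges F) e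
    omega

/-! ### Degrees in odd components -/

/-- A component of odd order `h` satisfies `∑ (7 - 2 deg v) ≥ 7`: each summand is at least `1`, which
settles `h ≥ 7`; for `h = 1, 3` the degrees are at most `h - 1`; for `h = 5` the degrees cannot all
be `3` by the handshake lemma. -/
lemma seven_le_sum_component {V : Type*} [Fintype V] (G : SimpleGraph V) [DecidableRel G.Adj]
    (hdeg : ∀ v, G.degree v ≤ 3) (C : G.ConnectedComponent)
    [DecidablePred (· ∈ C.supp)]
    (hC : Odd C.supp.ncard) :
    (7 : ℤ) ≤ ∑ v : C.supp, (7 - 2 * (G.degree v : ℤ)) := by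
  classical
  have hd : ∀ v : C.supp, (G.induce C.supp).degree v = G.degree v := fun v =>
    SimpleGraph.degree_induce_of_neighborSet_subset fun w hw => by
      have := v.2
      rw [SimpleGraph.ConnectedComponent.mem_supp_iff] at this ⊢
      rw [← this]
      exact (SimpleGraph.ConnectedComponent.connectedComponentMk_eq_of_adj hw).symm
  have hcard : C.supp.ncard = Fintype.card C.supp := by
    rw [← Nat.card_coe_set_eq, Nat.card_eq_fintype_card]
  have hlt : ∀ v : C.supp, G.degree v + 1 ≤ Fintype.card C.supp := fun v => by
    rw [← hd]; exact (G.induce C.supp).degree_lt_card_verts v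
  have hsum := (G.induce C.supp).sum_degrees_eq_twice_card_edges
  simp only [hd] at hsum
  rw [Finset.sum_sub_distrib, ← Finset.mul_sum, ← Nat.cast_sum]
  simp only [Finset.sum_const, Finset.card_univ, nsmul_eq_mul]
  rw [hcard] at hC
  have b3 : ∑ v : C.supp, G.degree v ≤ Fintype.card C.supp * 3 := by
    simpa using Finset.sum_le_card_nsmul Finset.univ _ 3 fun (v : C.supp) _ => hdeg v
  have bn : ∑ v : C.supp, G.degree v ≤ Fintype.card C.supp * (Fintype.card C.supp - 1) := by
    simpa using Finset.sum_le_card_nsmul Finset.univ (fun v : C.supp => G.degree v)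
      (Fintype.card C.supp - 1) fun (v : C.supp) _ => Nat.le_sub_one_of_lt (hlt v)
  generalize Fintype.card C.supp = h at *
  generalize (G.induce C.supp).edgeFinset.card = m at *
  obtain ⟨k, rfl⟩ := hC
  rw [hsum] at *
  rcases Nat.lt_or_ge k 3 with hk | hk
  · interval_cases k <;> push_cast <;> omega
  · push_cast; omega

lemma seven_mul_odd_le_sum {V : Type*} [Fintype V] (G : SimpleGraph V) [DecidableRel G.Adj]
    (hdeg : ∀ v, G.degree v ≤ 3) :
    7 * (G.oddComponents.ncard : ℤ) ≤ ∑ v, (7 - 2 * (G.degree v : ℤ)) := by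
  classical
  have h := Finset.sum_fiberwise (Finset.univ : Finset V) (fun v => G.connectedComponentMk v)
    (fun v => (7 - 2 * (G.degree v : ℤ)))
  rw [← h, Set.ncard_eq_toFinset_card', mul_comm, ← nsmul_eq_mul, ← Finset.sum_const]
  refine (Finset.sum_le_sum (g := fun C : G.ConnectedComponent =>
    ∑ v with G.connectedComponentMk v = C, (7 - 2 * (G.degree v : ℤ))) ?_).trans
    (Finset.sum_le_sum_of_subset_of_nonneg (Finset.subset_univ _) ?_)
  · intro C hC
    have := seven_le_sum_component G hdeg C (by simpa using hC)
    refine this.trans_eq ?_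
    rw [Finset.sum_subtype (p := (· ∈ C.supp))]
    simp
  · intro C _ _
    exact Finset.sum_nonneg fun v _ => by have := hdeg v; omega

/-! ### The Tutte–Berge formula -/

open Classical in
lemma ncard_verts_eq {V : Type*} [Fintype V] {G : SimpleGraph V} {M : G.Subgraph}
    (hM : M.IsMatching) : M.verts.ncard = 2 * M.edgeSet.ncard := by
  have h := M.spanningCoe.sum_degrees_eq_twice_card_edges
  rw [← M.edgeSet_spanningCoe, Set.ncard_eq_toFinset_card', Set.ncard_eq_toFinset_card',
    ← SimpleGraph.edgeFinset]
  refine Eq.trans ?_ h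
  rw [Finset.card_eq_sum_ones, ← Finset.sum_subset (Finset.subset_univ M.verts.toFinset)]
  · refine Finset.sum_congr rfl fun v hv => ?_
    obtain ⟨w, hw, hu⟩ := hM (by simpa using hv : v ∈ M.verts)
    refine (Finset.card_eq_one.2 ⟨w, ?_⟩).symm
    ext u
    simp only [SimpleGraph.mem_neighborFinset, SimpleGraph.Subgraph.spanningCoe_adj,
      Finset.mem_singleton]
    exact ⟨hu u, fun e => e ▸ hw⟩
  · intro v _ hv
    refine Finset.card_eq_zero.2 (Finset.eq_empty_of_forall_notMem fun u hu => hv ?_)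
    simp only [SimpleGraph.mem_neighborFinset, SimpleGraph.Subgraph.spanningCoe_adj] at hu
    simpa using hu.fst_mem

lemma ncard_edgeSet_le_matchingNumber {V : Type*} [Finite V] {G : SimpleGraph V} {M : G.Subgraph}
    (hM : M.IsMatching) : M.edgeSet.ncard ≤ matchingNumber G := by
  refine le_csSup ⟨G.edgeSet.ncard, ?_⟩ ⟨M, hM, rfl⟩
  rintro n ⟨N, -, rfl⟩
  exact Set.ncard_le_ncard N.edgeSet_subset (Set.toFinite _)

/-- `joinFin G d` is the join of `G` with the complete graph on `d` new vertices. -/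
def joinFin {V : Type*} (G : SimpleGraph V) (d : ℕ) : SimpleGraph (V ⊕ Fin d) where
  Adj x y := x ≠ y ∧ ∀ a b, x = Sum.inl a → y = Sum.inl b → G.Adj a b
  symm := ⟨fun _ _ h => ⟨h.1.symm, fun a b ha hb => (h.2 b a hb ha).symm⟩⟩
  loopless := ⟨fun _ h => h.1 rfl⟩

lemma joinFin_adj_inl {V : Type*} {G : SimpleGraph V} {d : ℕ} {a b : V} :
    (joinFin G d).Adj (Sum.inl a) (Sum.inl b) ↔ G.Adj a b := by
  refine ⟨fun h => h.2 a b rfl rfl, fun h => ⟨by simpa using h.ne, ?_⟩⟩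
  rintro _ _ ⟨⟩ ⟨⟩
  exact h

lemma joinFin_adj_inr {V : Type*} {G : SimpleGraph V} {d : ℕ} {i : Fin d} {x : V ⊕ Fin d}
    (h : x ≠ Sum.inr i) : (joinFin G d).Adj x (Sum.inr i) :=
  ⟨h, by simp⟩

/-- Restricting a perfect matching of the join to `G` loses at most the `d` partners of the new
vertices. -/
lemma card_le_of_isPerfectMatching_joinFin {V : Type*} [Fintype V] (G : SimpleGraph V) (d : ℕ)
    {M : (joinFin G d).Subgraph} (hM : M.IsPerfectMatching) :
    Fintype.card V ≤ 2 * matchingNumber G + d := by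
  classical
  let N : G.Subgraph :=
    { verts := {v | ∃ w, M.Adj (Sum.inl v) (Sum.inl w)}
      Adj := fun v w => M.Adj (Sum.inl v) (Sum.inl w)
      adj_sub := fun h => joinFin_adj_inl.1 h.adj_sub
      edge_vert := fun h => ⟨_, h⟩
      symm := ⟨fun _ _ h => h.symm⟩ }
  have hN : N.IsMatching := by
    rintro v ⟨w, hw⟩
    exact ⟨w, hw, fun u hu => Sum.inl_injective (hM.1.eq_of_adj_left hu hw)⟩
  have h1 := ncard_edgeSet_le_matchingNumber hN
  have h2 := ncard_verts_eq hN
  have h3 : (N.verts)ᶜ.ncard ≤ d := by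
    have hex : ∀ v : ↥(N.vertsᶜ), ∃ i : Fin d, M.Adj (Sum.inl v.1) (Sum.inr i) := fun v => by
      obtain ⟨w, hw, -⟩ := hM.1 (hM.2 (Sum.inl v.1))
      rcases w with w | i
      · exact absurd ⟨w, hw⟩ v.2
      · exact ⟨i, hw⟩
    choose f hf using hex
    have hinj : Function.Injective f := fun u v huv => by
      have hu := hf u
      rw [huv] at hu
      exact Subtype.ext (Sum.inl_injective (hM.1.eq_of_adj_right hu (hf v)))
    have := Nat.card_le_card_of_injective f hinj
    rwa [Nat.card_coe_set_eq, Nat.card_eq_fintype_card, Fintype.card_fin] at this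
  have h4 := Set.ncard_add_ncard_compl N.verts
  rw [Nat.card_eq_fintype_card] at h4
  omega

/-- The graph obtained from `G` by deleting every edge that meets `S`, so that the vertices of `S`
become isolated. -/
def isolate {V : Type*} (G : SimpleGraph V) (S : Set V) : SimpleGraph V where
  Adj x y := G.Adj x y ∧ x ∉ S ∧ y ∉ S
  symm := ⟨fun _ _ h => ⟨h.1.symm, h.2.2, h.2.1⟩⟩
  loopless := ⟨fun _ h => h.1.ne rfl⟩

lemma supp_isolate_of_mem {V : Type*} (G : SimpleGraph V) {S : Set V} {s : V} (hs : s ∈ S) :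
    ((isolate G S).connectedComponentMk s).supp = {s} := by
  ext v
  simp only [SimpleGraph.ConnectedComponent.mem_supp_iff, SimpleGraph.ConnectedComponent.eq,
    Set.mem_singleton_iff]
  refine ⟨?_, by rintro rfl; exact SimpleGraph.Reachable.refl _⟩
  rintro ⟨p⟩
  cases p.reverse with
  | nil => rfl
  | cons h _ => exact absurd hs h.2.1

/-- If `U` contains all the new vertices of the join and `S` is its trace on `V`, then the odd
components of the join minus `U` survive in `isolate G S`, which has the singletons of `S` as
further odd components. -/
lemma oddComponents_isolate {V : Type*} [Finite V] (G : SimpleGraph V) (d : ℕ)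
    (U : Set (V ⊕ Fin d)) (hU : ∀ i, Sum.inr i ∈ U) :
    ((⊤ : (joinFin G d).Subgraph).deleteVerts U).coe.oddComponents.ncard +
      (Sum.inl ⁻¹' U : Set V).ncard ≤ (isolate G (Sum.inl ⁻¹' U)).oddComponents.ncard := by
  classical
  set S : Set V := Sum.inl ⁻¹' U with hS
  set K := ((⊤ : (joinFin G d).Subgraph).deleteVerts U).coe with hK
  set H := isolate G S with hH
  -- `U` contains all the new vertices, so what is left outside `U` is exactly `Sᶜ`.
  let e : ↥(Sᶜ) ≃ ((⊤ : (joinFin G d).Subgraph).deleteVerts U).verts :=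
    Equiv.ofBijective (fun v => ⟨Sum.inl v.1, by
      simp only [SimpleGraph.Subgraph.deleteVerts_verts, SimpleGraph.Subgraph.verts_top]
      exact ⟨trivial, v.2⟩⟩) ⟨fun u v h => by
        simpa [Subtype.ext_iff] using h, by
      rintro ⟨v | i, hx⟩
      · exact ⟨⟨v, hx.2⟩, rfl⟩
      · exact absurd (hU i) hx.2⟩
  have hadj : ∀ u v : ↥(Sᶜ), K.Adj (e u) (e v) ↔ H.Adj u v := fun u v => by
    have hu : Sum.inl u.1 ∉ U := u.2
    have hv : Sum.inl v.1 ∉ U := v.2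
    have hu' : u.1 ∉ S := u.2
    have hv' : v.1 ∉ S := v.2
    change ((⊤ : (joinFin G d).Subgraph).deleteVerts U).Adj (Sum.inl u.1) (Sum.inl v.1) ↔ _
    simp [hH, isolate, hu, hv, hu', hv', joinFin_adj_inl]
  let φ : K →g H := ⟨fun x => (e.symm x).1, fun {x y} h => by
    rw [← hadj]; simpa using h⟩
  have hback : ∀ {u v : V} (p : H.Walk u v) (hu : u ∈ Sᶜ),
      ∃ hv : v ∈ Sᶜ, K.Reachable (e ⟨u, hu⟩) (e ⟨v, hv⟩) := by
    intro u v p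
    induction p with
    | nil => exact fun hu => ⟨hu, SimpleGraph.Reachable.refl _⟩
    | @cons u w v h p ih =>
      intro hu
      obtain ⟨hv, hr⟩ := ih h.2.2
      exact ⟨hv, (SimpleGraph.Adj.reachable ((hadj ⟨u, hu⟩ ⟨w, h.2.2⟩).2 h)).trans hr⟩
  have hsupp : ∀ C : K.ConnectedComponent, (C.map φ).supp = φ '' C.supp := by
    intro C
    induction C using SimpleGraph.ConnectedComponent.ind with | _ x =>
    ext v
    simp only [SimpleGraph.ConnectedComponent.map_mk, SimpleGraph.ConnectedComponent.mem_supp_iff,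
      SimpleGraph.ConnectedComponent.eq, Set.mem_image]
    constructor
    · rintro ⟨p⟩
      obtain ⟨hv, hr⟩ := hback p.reverse (e.symm x).2
      refine ⟨e ⟨v, hv⟩, ?_, by simp [φ]⟩
      have hr' : K.Reachable (e (e.symm x)) (e ⟨v, hv⟩) := hr
      rw [e.apply_symm_apply] at hr'
      exact hr'.symm
    · rintro ⟨y, hy, rfl⟩
      exact hy.map φ
  have hφinj : Function.Injective φ := fun x y h =>
    e.symm.injective (Subtype.ext h)
  have hmapinj : Function.Injective (SimpleGraph.ConnectedComponent.map φ) := fun C D h => by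
    have := hsupp C
    rw [h, hsupp D] at this
    exact SimpleGraph.ConnectedComponent.supp_injective (hφinj.image_injective this.symm)
  have hsub : SimpleGraph.ConnectedComponent.map φ '' K.oddComponents ∪
      H.connectedComponentMk '' S ⊆ H.oddComponents := by
    rintro _ (⟨C, hC, rfl⟩ | ⟨s, hs, rfl⟩)
    · change Odd _
      rw [hsupp, Set.ncard_image_of_injective _ hφinj]
      exact hC
    · change Odd _
      rw [supp_isolate_of_mem G hs]
      simp
  have hdisj : Disjoint (SimpleGraph.ConnectedComponent.map φ '' K.oddComponents)
      (H.connectedComponentMk '' S) := by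
    rw [Set.disjoint_left]
    rintro _ ⟨C, hC, rfl⟩ ⟨s, hs, h⟩
    have h1 : s ∈ (C.map φ).supp := h
    rw [hsupp] at h1
    obtain ⟨x, -, rfl⟩ := h1
    exact (e.symm x).2 hs
  have hfin := Set.ncard_le_ncard hsub (Set.toFinite _)
  rw [Set.ncard_union_eq hdisj (Set.toFinite _) (Set.toFinite _),
    Set.ncard_image_of_injective _ hmapinj, Set.InjOn.ncard_image] at hfin
  · omega
  · intro s hs t ht h
    have h1 := supp_isolate_of_mem G hs
    have h2 := supp_isolate_of_mem G ht
    rw [hH] at h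
    simp only [h, h2] at h1
    exact (Set.singleton_injective h1).symm

/-- The nontrivial half of the Tutte–Berge formula, with the components of `isolate G S` in place
of those of `G - S`: each vertex of `S` is an extra odd component there, which accounts for the
coefficient `2` of `|S|`. -/
lemma exists_tutteBerge {V : Type*} [Fintype V] (G : SimpleGraph V) :
    ∃ S : Set V, Fintype.card V + 2 * S.ncard ≤
      2 * matchingNumber G + (isolate G S).oddComponents.ncard := by
  classical
  rcases Nat.lt_or_ge (Fintype.card V) (2 * matchingNumber G + 2) with hlt | hge
  · refine ⟨∅, ?_⟩
    have hodd := (isolate G ∅).odd_ncard_oddComponents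
    rw [Nat.card_eq_fintype_card] at hodd
    rw [Set.ncard_empty]
    by_cases h : Odd (Fintype.card V)
    · have := (hodd.2 h).pos
      omega
    · rw [Nat.not_odd_iff_even] at h
      obtain ⟨k, hk⟩ := h
      omega
  -- With `d` two less than the deficiency `|V| - 2α'`, a perfect matching of the join would yield
  -- a matching of `G` with more than `α'` edges.
  obtain ⟨d, hd⟩ := Nat.exists_eq_add_of_le hge
  have hno : ¬ ∃ M : (joinFin G d).Subgraph, M.IsPerfectMatching := by
    rintro ⟨M, hM⟩
    have := card_le_of_isPerfectMatching_joinFin G d hM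
    omega
  rw [SimpleGraph.tutte] at hno
  push Not at hno
  obtain ⟨U, hU⟩ := hno
  unfold SimpleGraph.IsTutteViolator at hU
  have hpar := ((⊤ : (joinFin G d).Subgraph).deleteVerts U).coe.odd_ncard_oddComponents
  have hcard : Nat.card ((⊤ : (joinFin G d).Subgraph).deleteVerts U).verts + U.ncard
      = Fintype.card V + d := by
    have := Set.ncard_add_ncard_compl U
    rw [Nat.card_eq_fintype_card, Fintype.card_sum, Fintype.card_fin] at this
    rw [Nat.card_coe_set_eq, SimpleGraph.Subgraph.deleteVerts_verts,
      SimpleGraph.Subgraph.verts_top, ← Set.compl_eq_univ_sdiff]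
    omega
  -- The join has `|V| + d` vertices, an even number, so the number of odd components
  -- has the parity of `|U|`.
  have h2 : U.ncard + 2 ≤
      ((⊤ : (joinFin G d).Subgraph).deleteVerts U).coe.oddComponents.ncard := by
    rw [Nat.odd_iff, Nat.odd_iff] at hpar
    omega
  -- A new vertex outside `U` would be adjacent to everything left, leaving a single component.
  have hinr : ∀ i, Sum.inr i ∈ U := by
    by_contra! ⟨i, hi⟩
    have hsub : Subsingleton
        ((⊤ : (joinFin G d).Subgraph).deleteVerts U).coe.ConnectedComponent := by
      have hi' : Sum.inr i ∈ ((⊤ : (joinFin G d).Subgraph).deleteVerts U).verts := ⟨trivial, hi⟩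
      have key : ∀ x, ((⊤ : (joinFin G d).Subgraph).deleteVerts U).coe.Reachable x
          ⟨Sum.inr i, hi'⟩ := by
        intro x
        by_cases hx : x.1 = Sum.inr i
        · have : x = ⟨Sum.inr i, hi'⟩ := Subtype.ext hx
          rw [this]
        · refine SimpleGraph.Adj.reachable ?_
          have := x.2.2
          simp [hi, this, joinFin_adj_inr hx]
      refine ⟨fun C D => ?_⟩
      induction C using SimpleGraph.ConnectedComponent.ind with | _ x =>
      induction D using SimpleGraph.ConnectedComponent.ind with | _ y =>
      exact SimpleGraph.ConnectedComponent.eq.2 ((key x).trans (key y).symm)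
    have := Set.ncard_le_one_of_subsingleton
      ((⊤ : (joinFin G d).Subgraph).deleteVerts U).coe.oddComponents
    omega
  refine ⟨Sum.inl ⁻¹' U, ?_⟩
  have h3 := oddComponents_isolate G d U hinr
  have h4 : (Sum.inl ⁻¹' U : Set V).ncard + d ≤ U.ncard := by
    have hsub : Sum.inl '' (Sum.inl ⁻¹' U : Set V) ∪ Set.range Sum.inr ⊆ U := by
      rintro _ (⟨v, hv, rfl⟩ | ⟨i, rfl⟩)
      · exact hv
      · exact hinr i
    have := Set.ncard_le_ncard hsub (Set.toFinite _)
    rw [Set.ncard_union_eq _ (Set.toFinite _) (Set.toFinite _),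
      Set.ncard_image_of_injective _ Sum.inl_injective, ← Set.image_univ,
      Set.ncard_image_of_injective _ Sum.inr_injective, Set.ncard_univ, Nat.card_fin] at this
    · exact this
    · rw [Set.disjoint_left]
      rintro _ ⟨v, -, rfl⟩ ⟨i, hi⟩
      cases hi
  omega

/-! ### The bound -/

theorem stmt_8 {V : Type*} [Fintype V] [DecidableEq V] (G : SimpleGraph V) [DecidableRel G.Adj]
    (hdeg : ∀ v, G.degree v ≤ 3) :
    (4 / 9 : ℝ) * ((Finset.univ.filter fun v => G.degree v = 3).card : ℝ)
      + (1 / 3 : ℝ) * ((Finset.univ.filter fun v => G.degree v = 2).card : ℝ)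
      + (2 / 9 : ℝ) * ((Finset.univ.filter fun v => G.degree v = 1).card : ℝ)
      - (1 / 9 : ℝ) * (Nat.card G.ConnectedComponent : ℝ)
      ≤ (matchingNumber G : ℝ) := by
  classical
  obtain ⟨S, hS⟩ := exists_tutteBerge G
  set F : Finset (Sym2 V) := S.toFinset.biUnion fun s => G.incidenceFinset s with hF
  have hH : isolate G S = G.deleteEdges F := by
    ext x y
    simp only [isolate, SimpleGraph.deleteEdges_adj, hF, Finset.mem_coe, Finset.mem_biUnion,
      Set.mem_toFinset, SimpleGraph.mem_incidenceFinset, SimpleGraph.mk'_mem_incidenceSet_iff,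
      not_exists, not_and]
    constructor
    · rintro ⟨h, hx, hy⟩
      refine ⟨h, fun s hs _ => ?_⟩
      rintro (rfl | rfl) <;> contradiction
    · rintro ⟨h, h'⟩
      exact ⟨h, fun hx => h' x hx h (Or.inl rfl), fun hy => h' y hy h (Or.inr rfl)⟩
  rw [hH] at hS
  have hFcard : F.card ≤ 3 * S.ncard := by
    rw [Set.ncard_eq_toFinset_card', mul_comm]
    exact Finset.card_biUnion_le_card_mul _ _ _ fun s _ => by
      rw [SimpleGraph.card_incidenceFinset_eq_degree]; exact hdeg s
  have hcomp := card_connectedComponent_deleteEdges_le G F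
  have hodd : (G.deleteEdges F).oddComponents.ncard ≤
      Nat.card (G.deleteEdges F).ConnectedComponent := Set.ncard_le_card _
  have hseven := seven_mul_odd_le_sum (G.deleteEdges F)
    fun v => (SimpleGraph.degree_le_of_le (G.deleteEdges_le _)).trans (hdeg v)
  have hsumH := (G.deleteEdges F).sum_degrees_eq_twice_card_edges
  have hsumG := G.sum_degrees_eq_twice_card_edges
  have hedges : G.edgeFinset.card ≤ (G.deleteEdges F).edgeFinset.card + F.card := by
    rw [SimpleGraph.edgeFinset_deleteEdges]
    have := Finset.le_card_sdiff F G.edgeFinset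
    omega
  rw [Finset.sum_sub_distrib, ← Finset.mul_sum, ← Nat.cast_sum, hsumH] at hseven
  simp only [Finset.sum_const, Finset.card_univ, nsmul_eq_mul] at hseven
  -- Only isolated vertices contribute to the difference of the two sides.
  have hcount : 4 * (Finset.univ.filter fun v => G.degree v = 3).card
      + 3 * (Finset.univ.filter fun v => G.degree v = 2).card
      + 2 * (Finset.univ.filter fun v => G.degree v = 1).card
      ≤ Fintype.card V + ∑ v, G.degree v := by
    rw [← Finset.card_univ, Finset.card_eq_sum_ones Finset.univ, ← Finset.sum_add_distrib]
    simp only [Finset.card_filter, Finset.mul_sum, ← Finset.sum_add_distrib]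
    refine Finset.sum_le_sum fun v _ => ?_
    have := hdeg v
    split_ifs <;> omega
  have hmain : 4 * (Finset.univ.filter fun v => G.degree v = 3).card
      + 3 * (Finset.univ.filter fun v => G.degree v = 2).card
      + 2 * (Finset.univ.filter fun v => G.degree v = 1).card
      ≤ 9 * matchingNumber G + Nat.card G.ConnectedComponent := by
    omega
  have hreal : (4 : ℝ) * ((Finset.univ.filter fun v => G.degree v = 3).card : ℝ)
      + 3 * ((Finset.univ.filter fun v => G.degree v = 2).card : ℝ)
      + 2 * ((Finset.univ.filter fun v => G.degree v = 1).card : ℝ)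
      ≤ 9 * (matchingNumber G : ℝ) + (Nat.card G.ConnectedComponent : ℝ) := by
    exact_mod_cast hmain
  linarith
end

section
/- Let k ≥ 3 be an odd integer, and set a* = (k−1)/(k(k²−3)) and b* = (k²−k−2)/(k(k²−3)). Then for all real numbers a and b: (1) if a ≤ a*, the pair (a,b) is k-good if and only if b ≤ b* + 2·(a*−a)/k; (2) if a > a*, the pair (a,b) is k-good if and only if b ≤ b* + a* − a. -/
/-- A pair `(a, b)` of reals is `k`-good if there is a constant `T` such that every finite
connected simple graph `G` with maximum degree at most `k` satisfies
`α'(G) ≥ a·|V(G)| + b·|E(G)| − T`. -/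
def kGood (k : ℕ) (a b : ℝ) : Prop :=
  ∃ T : ℝ, ∀ (V : Type) (G : SimpleGraph V), Finite V → G.Connected →
    (∀ v : V, (G.neighborSet v).ncard ≤ k) →
    a * (Nat.card V : ℝ) + b * (G.edgeSet.ncard : ℝ) - T ≤ (matchingNumber G : ℝ)

namespace MatchBound

open SimpleGraph

/-! ### Edge counts relative to a labelled partition -/

variable {V L : Type*}

/-- The handshake lemma, in terms of `Set.ncard`. -/
lemma sum_ncard_neighborSet [Fintype V] (G : SimpleGraph V) :
    ∑ v, (G.neighborSet v).ncard = 2 * G.edgeSet.ncard := by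
  classical
  have := G.sum_degrees_eq_twice_card_edges
  rw [Set.ncard_eq_toFinset_card' G.edgeSet]
  rw [← SimpleGraph.edgeFinset, ← this]
  refine Finset.sum_congr rfl fun v _ => ?_
  rw [Set.ncard_eq_toFinset_card']; rfl

/-- The edges of `G` with at least one end in `S`, the set of vertices labelled `none`. -/
def hitEdges (G : SimpleGraph V) (l : V → Option L) : Set (Sym2 V) :=
  {e | e ∈ G.edgeSet ∧ ∃ v ∈ e, l v = none}

/-- The edges of `G` inside the part labelled `c`, as a graph on all of `V`; the vertices outside
the part are isolated in it. -/
def partGraph (G : SimpleGraph V) (l : V → Option L) (c : L) : SimpleGraph V where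
  Adj u v := G.Adj u v ∧ l u = some c ∧ l v = some c
  symm := ⟨fun _ _ h => ⟨h.1.symm, h.2.2, h.2.1⟩⟩
  loopless := ⟨fun _ h => G.loopless.irrefl _ h.1⟩

/-- No edge of `G` joins two different parts; equivalently, every part is a union of components
of `G - S`. -/
def Respects (G : SimpleGraph V) (l : V → Option L) : Prop :=
  ∀ u v, G.Adj u v → ∀ c d, l u = some c → l v = some d → c = d

lemma edge_split [Finite V] [Fintype L] (G : SimpleGraph V) (l : V → Option L)
    (h : Respects G l) :
    G.edgeSet.ncard = (hitEdges G l).ncard + ∑ c, (partGraph G l c).edgeSet.ncard := by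
  have h1 : G.edgeSet = hitEdges G l ∪ ⋃ c, (partGraph G l c).edgeSet := by
    ext e
    induction e with | _ u v
    simp only [hitEdges, Set.mem_union, Set.mem_ofPred_eq, Set.mem_iUnion, mem_edgeSet, partGraph, Sym2.mem_iff]
    constructor
    · intro e
      rcases hu : l u with _ | c
      · exact Or.inl ⟨e, u, by simp, hu⟩
      rcases hv : l v with _ | d
      · exact Or.inl ⟨e, v, by simp, hv⟩
      obtain rfl := h u v e c d hu hv
      exact Or.inr ⟨c, e, rfl, rfl⟩
    · rintro (h | ⟨c, h⟩)
      exacts [h.1, h.1]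
  rw [h1, Set.ncard_union_eq _ (Set.toFinite _) (Set.toFinite _),
    Set.ncard_iUnion_of_finite (fun _ => Set.toFinite _), finsum_eq_sum_of_fintype]
  · intro c d hcd
    refine Set.disjoint_left.2 fun e => ?_
    induction e with | _ u v
    simp only [mem_edgeSet, partGraph]
    rintro ⟨_, h, _⟩ ⟨_, h', _⟩
    exact hcd (by simpa [h] using h')
  · refine Set.disjoint_left.2 fun e => ?_
    induction e with | _ u v
    simp only [hitEdges, Set.mem_ofPred_eq, Set.mem_iUnion, mem_edgeSet, partGraph, Sym2.mem_iff]
    rintro ⟨_, w, hw, hw'⟩ ⟨c, _, h1, h2⟩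
    rcases hw with rfl | rfl <;> simp_all

/-- The set of vertices with a given label. -/
def fiber (l : V → Option L) (c : Option L) : Set V := {v | l v = c}

lemma card_fiber [Finite V] [Fintype L] (l : V → Option L) :
    Nat.card V = (fiber l none).ncard + ∑ c : L, (fiber l (some c)).ncard := by
  have := Set.ncard_iUnion_of_finite (s := fiber l) (fun _ => Set.toFinite _) (by
    intro c d hcd
    refine Set.disjoint_left.2 fun v hv hv' => hcd ?_
    exact (hv : l v = c).symm.trans hv')
  rw [finsum_eq_sum_of_fintype, Fintype.sum_option] at this
  rw [← this, ← Set.ncard_univ]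
  congr 1
  ext v
  simp [fiber]

lemma hitEdges_le [Finite V] (G : SimpleGraph V) (l : V → Option L) (k : ℕ)
    (hk : ∀ v, (G.neighborSet v).ncard ≤ k) : (hitEdges G l).ncard ≤ k * (fiber l none).ncard := by
  classical
  have := Fintype.ofFinite V
  have h1 : hitEdges G l ⊆ ⋃ v ∈ (fiber l none).toFinset, G.incidenceSet v := by
    rintro e ⟨he, v, hv, hv'⟩
    simp only [Set.mem_iUnion]
    exact ⟨v, Set.mem_toFinset.2 hv', he, hv⟩
  refine (Set.ncard_le_ncard h1 (Set.toFinite _)).trans ?_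
  refine (Finset.set_ncard_biUnion_le _ _).trans ?_
  rw [Set.ncard_eq_toFinset_card' (fiber l none), mul_comm, ← smul_eq_mul]
  refine Finset.sum_le_card_nsmul _ _ _ fun v _ => ?_
  rw [← Nat.card_coe_set_eq, Nat.card_congr (G.incidenceSetEquivNeighborSet v), Nat.card_coe_set_eq]
  exact hk v

lemma partGraph_le [Finite V] (G : SimpleGraph V) (l : V → Option L) (c : L) (d : ℕ)
    (hk : ∀ v, l v = some c → ((partGraph G l c).neighborSet v).ncard ≤ d) :
    2 * (partGraph G l c).edgeSet.ncard ≤ (fiber l (some c)).ncard * d := by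
  classical
  have := Fintype.ofFinite V
  rw [← sum_ncard_neighborSet, Set.ncard_eq_toFinset_card' (fiber l (some c)), ← smul_eq_mul]
  rw [← Finset.sum_subset (Finset.subset_univ (fiber l (some c)).toFinset)]
  · refine Finset.sum_le_card_nsmul _ _ _ fun v hv => hk v ?_
    exact (Set.mem_toFinset (s := fiber l (some c))).1 hv
  · intro v _ hv
    rw [Set.ncard_eq_zero]
    ext w
    simp only [mem_neighborSet, partGraph, Set.mem_empty_iff_false, iff_false]
    rintro ⟨_, h, _⟩
    exact hv (Set.mem_toFinset.2 h)

lemma partGraph_le_deg [Finite V] (G : SimpleGraph V) (l : V → Option L) (c : L) (k : ℕ)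
    (hk : ∀ v, (G.neighborSet v).ncard ≤ k) :
    2 * (partGraph G l c).edgeSet.ncard ≤ (fiber l (some c)).ncard * k :=
  partGraph_le G l c k fun v _ => (Set.ncard_le_ncard (fun _ h => h.1) (Set.toFinite _)).trans (hk v)

lemma partGraph_le_self [Finite V] (G : SimpleGraph V) (l : V → Option L) (c : L) :
    2 * (partGraph G l c).edgeSet.ncard ≤ (fiber l (some c)).ncard * ((fiber l (some c)).ncard - 1) :=
  partGraph_le G l c _ fun v hv => by
    have : v ∈ fiber l (some c) := hv
    rw [← Set.ncard_sdiff_singleton_of_mem this]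
    refine Set.ncard_le_ncard (fun w h => ⟨h.2.2, ?_⟩) (Set.toFinite _)
    rintro rfl
    exact G.loopless.irrefl _ h.1

/-- Contracting every part of a connected graph to a point yields a connected graph on
`|S| + |L|` vertices, each of whose edges comes from an edge meeting `S`. -/
lemma conn_count [Finite V] [Finite L] (G : SimpleGraph V) (hG : G.Connected) (l : V → Option L)
    (h : Respects G l) (hs : ∀ c : L, ∃ v, l v = some c) :
    (fiber l none).ncard + Nat.card L ≤ (hitEdges G l).ncard + 1 := by
  classical
  let p : V → (fiber l none) ⊕ L := fun v =>
    match hv : l v with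
    | none => Sum.inl ⟨v, hv⟩
    | some c => Sum.inr c
  have p0 : ∀ v (hv : l v = none), p v = Sum.inl ⟨v, hv⟩ := by
    intro v hv; simp only [p]; split <;> simp_all
  have p1 : ∀ v c (hv : l v = some c), p v = Sum.inr c := by
    intro v c hv; simp only [p]; split <;> simp_all
  have psurj : Function.Surjective p := by
    rintro (⟨v, hv⟩ | c)
    · exact ⟨v, p0 v hv⟩
    · obtain ⟨v, hv⟩ := hs c; exact ⟨v, p1 v c hv⟩
  let H : SimpleGraph ((fiber l none) ⊕ L) :=
    SimpleGraph.fromRel fun x y => ∃ u v, G.Adj u v ∧ p u = x ∧ p v = y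
  have hadj : ∀ u v, G.Adj u v → H.Reachable (p u) (p v) := by
    intro u v huv
    by_cases e : p u = p v
    · rw [e]
    · refine Adj.reachable ?_
      rw [fromRel_adj]
      exact ⟨e, Or.inl ⟨u, v, huv, rfl, rfl⟩⟩
  have hreach : ∀ u v, H.Reachable (p u) (p v) := by
    intro u v
    obtain ⟨w⟩ := hG.preconnected u v
    induction w with
    | nil => exact Reachable.refl _
    | cons h _ ih => exact (hadj _ _ h).trans ih
  have hH : H.Connected := by
    have : Nonempty ((fiber l none) ⊕ L) := hG.nonempty.map p
    refine ⟨fun x y => ?_⟩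
    obtain ⟨u, rfl⟩ := psurj x
    obtain ⟨v, rfl⟩ := psurj y
    exact hreach u v
  have h1 := hH.card_vert_le_card_edgeSet_add_one
  rw [Nat.card_sum, Nat.card_coe_set_eq, Nat.card_coe_set_eq] at h1
  refine h1.trans (Nat.add_le_add_right ?_ 1)
  have h2 : H.edgeSet ⊆ Sym2.map p '' hitEdges G l := by
    have key : ∀ u v, G.Adj u v → p u ≠ p v → s(u,v) ∈ hitEdges G l := by
      intro u v huv hne
      refine ⟨huv, ?_⟩
      by_contra! hcon
      obtain ⟨c, hc⟩ := Option.ne_none_iff_exists'.1 (hcon u (by simp))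
      obtain ⟨d, hd⟩ := Option.ne_none_iff_exists'.1 (hcon v (by simp))
      rw [p1 u c hc, p1 v d hd, h u v huv c d hc hd] at hne
      exact hne rfl
    intro e
    induction e with | _ x y
    rw [mem_edgeSet, fromRel_adj]
    rintro ⟨hne, ⟨u, v, huv, rfl, rfl⟩ | ⟨u, v, huv, rfl, rfl⟩⟩
    · exact ⟨s(u,v), key u v huv hne, rfl⟩
    · exact ⟨s(u,v), key u v huv hne.symm, Sym2.eq_swap⟩
  exact (Set.ncard_le_ncard h2 (Set.toFinite _)).trans (Set.ncard_image_le (Set.toFinite _))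

/-! ### Matchings -/

lemma bddAbove_matching [Finite V] (G : SimpleGraph V) :
    BddAbove {n | ∃ M : G.Subgraph, M.IsMatching ∧ M.edgeSet.ncard = n} := by
  refine ⟨G.edgeSet.ncard, ?_⟩
  rintro _ ⟨M, _, rfl⟩
  exact Set.ncard_le_ncard M.edgeSet_subset (Set.toFinite _)

lemma le_matchingNumber [Finite V] {G : SimpleGraph V} {M : G.Subgraph} (hM : M.IsMatching) :
    M.edgeSet.ncard ≤ matchingNumber G :=
  le_csSup (bddAbove_matching G) ⟨M, hM, rfl⟩

lemma matchingNumber_le {G : SimpleGraph V} {N : ℕ}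
    (h : ∀ M : G.Subgraph, M.IsMatching → M.edgeSet.ncard ≤ N) : matchingNumber G ≤ N := by
  refine csSup_le ⟨_, ⊥, ?_, rfl⟩ ?_
  · intro v hv; exact hv.elim
  · rintro _ ⟨M, hM, rfl⟩; exact h M hM

lemma matching_neighborSet_le [Finite V] {G : SimpleGraph V} {M : G.Subgraph} (hM : M.IsMatching) (v : V) :
    (M.spanningCoe.neighborSet v).ncard ≤ 1 := by
  rw [Set.ncard_le_one (Set.toFinite _)]
  intro a ha b hb
  exact (hM (M.edge_vert ha)).unique ha hb

lemma two_mul_edges_matching [Finite V] {G : SimpleGraph V} {M : G.Subgraph} (hM : M.IsMatching) :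
    2 * M.edgeSet.ncard = M.verts.ncard := by
  classical
  have := Fintype.ofFinite V
  have h : M.edgeSet = M.spanningCoe.edgeSet := by simp
  rw [h, ← sum_ncard_neighborSet, Set.ncard_eq_toFinset_card', Finset.card_eq_sum_ones,
    ← Finset.sum_subset (Finset.subset_univ M.verts.toFinset)]
  · refine Finset.sum_congr rfl fun v hv => ?_
    obtain ⟨w, hw, hu⟩ := hM (Set.mem_toFinset.1 hv)
    rw [Set.ncard_eq_one]
    refine ⟨w, Set.ext fun x => ⟨fun hx => hu x hx, ?_⟩⟩
    rintro rfl; exact hw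
  · intro v _ hv
    rw [Set.ncard_eq_zero]
    ext w
    simp only [mem_neighborSet, Subgraph.spanningCoe_adj, Set.mem_empty_iff_false, iff_false]
    exact fun h => hv (Set.mem_toFinset.2 (M.edge_vert h))

/-- The easy direction of the Tutte-Berge formula: a matching has at most `|S|` edges meeting `S`,
and at most half as many edges as vertices in each part. -/
lemma matchingNumber_le_of_respects [Finite V] [Fintype L] (G : SimpleGraph V)
    (l : V → Option L) (h : Respects G l) :
    matchingNumber G ≤ (fiber l none).ncard + ∑ c : L, (fiber l (some c)).ncard / 2 := by
  refine matchingNumber_le fun M hM => ?_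
  have e : M.edgeSet = M.spanningCoe.edgeSet := by simp
  rw [e, edge_split M.spanningCoe l fun u v huv => h u v (M.adj_sub huv)]
  refine Nat.add_le_add ?_ (Finset.sum_le_sum fun c _ => ?_)
  · simpa using hitEdges_le M.spanningCoe l 1 (matching_neighborSet_le hM)
  · have := partGraph_le_deg M.spanningCoe l c 1 (matching_neighborSet_le hM)
    omega

/-! ### The Tutte-Berge formula up to a constant -/

/-- The join of `G` with a complete graph on `d` vertices: the added vertices are adjacent to all
others. -/
def join (G : SimpleGraph V) (d : ℕ) : SimpleGraph (V ⊕ Fin d) where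
  Adj x y := x ≠ y ∧ ∀ u v, x = Sum.inl u → y = Sum.inl v → G.Adj u v
  symm := ⟨fun _ _ h => ⟨h.1.symm, fun u v hu hv => (h.2 v u hv hu).symm⟩⟩
  loopless := ⟨fun _ h => h.1 rfl⟩

/-- Deleting the `d` added vertices from a perfect matching of the join leaves a matching of `G` that
misses at most `d` vertices. -/
lemma join_perfect [Finite V] (G : SimpleGraph V) (d : ℕ) (M : (join G d).Subgraph)
    (hM : M.IsPerfectMatching) : Nat.card V ≤ 2 * matchingNumber G + d := by
  rw [Subgraph.isPerfectMatching_iff] at hM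
  let M' : G.Subgraph :=
    { verts := {v | ∃ w, M.Adj (Sum.inl v) (Sum.inl w)}
      Adj := fun v w => M.Adj (Sum.inl v) (Sum.inl w)
      adj_sub := fun h => (M.adj_sub h).2 _ _ rfl rfl
      edge_vert := fun h => ⟨_, h⟩
      symm := ⟨fun _ _ h => h.symm⟩ }
  have hM' : M'.IsMatching := by
    rintro v ⟨w, hw⟩
    refine ⟨w, hw, fun x hx => ?_⟩
    exact Sum.inl_injective ((hM (Sum.inl v)).unique hx hw)
  have h1 := two_mul_edges_matching hM'
  have h2 := le_matchingNumber hM'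
  have h3 : M'.vertsᶜ.ncard ≤ d := by
    choose f hf hu using hM
    have hr : ∀ v ∈ M'.vertsᶜ, ∃ j, f (Sum.inl v) = Sum.inr j := by
      intro v hv
      rcases hx : f (Sum.inl v) with w | j
      · exact (hv ⟨w, hx ▸ hf (Sum.inl v)⟩).elim
      · exact ⟨j, rfl⟩
    have h4 : (fun v => f (Sum.inl v)) '' M'.vertsᶜ ⊆ Set.range Sum.inr := by
      rintro _ ⟨v, hv, rfl⟩
      obtain ⟨j, hj⟩ := hr v hv
      exact ⟨j, hj.symm⟩
    have h5 : Set.InjOn (fun v => f (Sum.inl v)) M'.vertsᶜ := by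
      intro v _ w _ hvw
      have a1 := (hf (Sum.inl v)).symm
      have a2 := (hf (Sum.inl w)).symm
      simp only at hvw
      rw [← hvw] at a2
      exact Sum.inl_injective ((hu _ _ a1).trans (hu _ _ a2).symm)
    rw [← h5.ncard_image]
    refine (Set.ncard_le_ncard h4 (Set.toFinite _)).trans ?_
    rw [Set.ncard_range_of_injective Sum.inr_injective]
    simp
  have h6 := Set.ncard_add_ncard_compl M'.verts
  omega

universe u

/-- The hard direction of the Tutte-Berge formula, with an additive loss of one: the parts are
the components of `G - S`. -/
lemma berge {V : Type u} [Finite V] [Nonempty V] (G : SimpleGraph V) :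
    ∃ (L : Type u) (_ : Fintype L) (l : V → Option L), Respects G l ∧ (∀ c, ∃ v, l v = some c) ∧
      Nat.card V + (fiber l none).ncard ≤
        2 * matchingNumber G + {c : L | Odd (fiber l (some c)).ncard}.ncard + 1 := by
  classical
  by_cases hn : Nat.card V ≤ 2 * matchingNumber G + 1
  -- With at most one unmatched vertex, `S = ∅` and a single part will do.
  · refine ⟨PUnit, inferInstance, fun _ => some PUnit.unit, fun _ _ _ _ _ _ _ => rfl,
      fun c => ⟨Classical.arbitrary V, rfl⟩, ?_⟩
    have : fiber (fun _ : V => some PUnit.unit) none = ∅ := by ext; simp [fiber]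
    rw [this, Set.ncard_empty]
    omega
  -- `d` is chosen too small for the join to have a perfect matching, and such that the join has an
  -- even number of vertices.
  obtain ⟨d, hd⟩ : ∃ d, Nat.card V = 2 * matchingNumber G + 2 + d := Nat.exists_eq_add_of_le (by omega)
  have hno : ¬ ∃ M : (join G d).Subgraph, M.IsPerfectMatching := by
    rintro ⟨M, hM⟩
    have := join_perfect G d M hM
    omega
  rw [tutte] at hno
  push Not at hno
  obtain ⟨U, hU⟩ := hno
  unfold IsTutteViolator at hU
  set W := (⊤ : (join G d).Subgraph).deleteVerts U with hW
  have hmem : ∀ x, x ∈ W.verts ↔ x ∉ U := by intro x; simp [hW]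
  have hKadj : ∀ x y : W.verts, W.coe.Adj x y ↔ (join G d).Adj x y := by
    rintro ⟨x, hx⟩ ⟨y, hy⟩
    rw [hmem] at hx hy
    simp [hW, hx, hy]
  have := Fintype.ofFinite W.coe.ConnectedComponent
  by_cases hall : ∀ j, Sum.inr j ∈ U
  -- A violator containing all added vertices leaves exactly a subgraph of `G`.
  · let l : V → Option W.coe.ConnectedComponent := fun v =>
      if h : Sum.inl v ∈ W.verts then some (W.coe.connectedComponentMk ⟨Sum.inl v, h⟩) else none
    have l1 : ∀ v c, l v = some c ↔ ∃ h : Sum.inl v ∈ W.verts,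
        W.coe.connectedComponentMk ⟨Sum.inl v, h⟩ = c := by
      intro v c
      by_cases h : Sum.inl v ∈ W.verts <;> simp [l, h]
    have l0 : ∀ v, l v = none ↔ Sum.inl v ∈ U := by
      intro v
      by_cases h : Sum.inl v ∈ W.verts
      · simp [l, h, (hmem _).1 h]
      · simp only [l, h, dite_false, true_iff]
        simpa [hmem] using h
    refine ⟨_, this, l, ?_, ?_, ?_⟩
    · intro u v huv c c' hc hc'
      obtain ⟨h, rfl⟩ := (l1 _ _).1 hc
      obtain ⟨h', rfl⟩ := (l1 _ _).1 hc'
      refine ConnectedComponent.sound (Adj.reachable ?_)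
      rw [hKadj]
      refine ⟨fun e => huv.ne (Sum.inl_injective e), ?_⟩
      intro u' v' hu hv
      rwa [← Sum.inl_injective hu, ← Sum.inl_injective hv]
    · intro c
      induction c using ConnectedComponent.ind with | _ x
      obtain ⟨v | j, hx⟩ := x
      · exact ⟨v, (l1 _ _).2 ⟨hx, rfl⟩⟩
      · exact ((hmem _).1 hx (hall j)).elim
    · have e1 : ∀ c, (fiber l (some c)).ncard = c.supp.ncard := by
        intro c
        rw [← Set.ncard_image_of_injective _ (Sum.inl_injective : Function.Injective (Sum.inl : V → V ⊕ Fin d)),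
          ← Set.ncard_image_of_injective c.supp Subtype.val_injective]
        congr 1
        ext x
        constructor
        · rintro ⟨v, hv, rfl⟩
          obtain ⟨h, h'⟩ := (l1 _ _).1 hv
          exact ⟨⟨_, h⟩, h', rfl⟩
        · rintro ⟨⟨v | j, hx⟩, hc, rfl⟩
          · exact ⟨v, (l1 _ _).2 ⟨hx, hc⟩, rfl⟩
          · exact ((hmem _).1 hx (hall j)).elim
      have e2 : {c | Odd (fiber l (some c)).ncard} = W.coe.oddComponents := by
        ext c; simp [e1]
      have e3 : (fiber l none).ncard + d ≤ U.ncard := by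
        have : Sum.inl '' (fiber l none) ∪ Set.range Sum.inr ⊆ U := by
          rintro _ (⟨v, hv, rfl⟩ | ⟨j, rfl⟩)
          · exact (l0 v).1 hv
          · exact hall j
        refine le_trans (le_of_eq ?_) (Set.ncard_le_ncard this (Set.toFinite _))
        rw [Set.ncard_union_eq _ (Set.toFinite _) (Set.toFinite _),
          Set.ncard_image_of_injective _ Sum.inl_injective,
          Set.ncard_range_of_injective Sum.inr_injective]
        · simp
        · refine Set.disjoint_left.2 ?_
          rintro _ ⟨v, _, rfl⟩ ⟨j, hj⟩
          cases hj
      rw [e2]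
      omega
  · exfalso
    -- Otherwise the remaining graph is connected, so `U` is empty and the join would have odd order.
    push Not at hall
    obtain ⟨j, hj⟩ := hall
    have hj' := (hmem _).2 hj
    have hr : ∀ x, W.coe.connectedComponentMk x = W.coe.connectedComponentMk ⟨_, hj'⟩ := by
      intro x
      by_cases hx : x = ⟨_, hj'⟩
      · rw [hx]
      refine ConnectedComponent.sound (Adj.reachable ?_)
      rw [hKadj]
      refine ⟨fun e => hx (Subtype.ext e), ?_⟩
      intro u v _ hv
      cases hv
    have hsub : Subsingleton W.coe.ConnectedComponent := by
      refine ⟨fun c c' => ?_⟩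
      induction c using ConnectedComponent.ind
      induction c' using ConnectedComponent.ind
      rw [hr, ← hr]
    have h1 : W.coe.oddComponents.ncard ≤ 1 := Set.ncard_le_one_of_subsingleton _
    have h2 : U.ncard = 0 := by omega
    have h3 : W.coe.oddComponents.ncard = 1 := by omega
    have h4 := (odd_ncard_oddComponents W.coe).1 (by rw [h3]; exact odd_one)
    rw [Set.ncard_eq_zero] at h2
    have h5 : W.verts = Set.univ := by ext x; simp [hmem, h2]
    rw [Nat.card_coe_set_eq, h5, Set.ncard_univ, Nat.card_sum, hd] at h4
    simp only [Nat.card_eq_fintype_card, Fintype.card_fin] at h4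
    have h6 : 2 * matchingNumber G + 2 + d + d = 2 * (matchingNumber G + 1 + d) := by ring
    rw [h6, ← Nat.not_even_iff_odd] at h4
    exact h4 (even_two_mul _)

/-! ### The lower bound on the matching number -/

/-- The contribution of one component, with `n` vertices and `E` edges, to `lower_bound`. -/
lemma part_ineq {k n E : ℕ} (hk : 3 ≤ k) (hodd : Odd k) (h1 : 2 * E ≤ n * k)
    (h2 : 2 * E ≤ n * (n - 1)) :
    2 * ((k : ℝ) - 1) * (n - 1) + 2 * (k - 2) * (k + 1) * E ≤
      k * (k ^ 2 - 3) * (n - if Odd n then 1 else 0) := by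
  have hk' : (3 : ℝ) ≤ k := by exact_mod_cast hk
  split_ifs with hn
  · have hn1 : 1 ≤ n := hn.pos
    have hn1' : (1 : ℝ) ≤ n := by exact_mod_cast hn1
    -- `k (k² - 3) - 2 (k - 1) = (k - 2) (k² + 2 k - 1)`, so a factor `k - 2` cancels.
    suffices h : ((k : ℝ) + 1) * (2 * E) ≤ (n - 1) * (k ^ 2 + 2 * k - 1) by
      nlinarith [mul_le_mul_of_nonneg_left h (by linarith : (0 : ℝ) ≤ k - 2)]
    rcases le_or_gt n k with hnk | hnk
    · have h2' : (2 : ℝ) * E ≤ n * (n - 1) := by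
        have : ((2 * E : ℕ) : ℝ) ≤ ((n * (n - 1) : ℕ) : ℝ) := by exact_mod_cast h2
        push_cast [Nat.cast_sub hn1] at this
        exact this
      have hnk' : (n : ℝ) ≤ k := by exact_mod_cast hnk
      have h3 : ((k : ℝ) + 1) * n ≤ k ^ 2 + 2 * k - 1 := by nlinarith
      nlinarith [mul_le_mul_of_nonneg_left h3 (by linarith : (0 : ℝ) ≤ n - 1)]
    · have hnk2 : k + 2 ≤ n := by
        rcases hn with ⟨x, rfl⟩
        rcases hodd with ⟨y, rfl⟩
        omega
      have h3 : 2 * E + 1 ≤ n * k := by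
        rcases hn.mul hodd with ⟨x, hx⟩
        omega
      have h3' : (2 : ℝ) * E + 1 ≤ n * k := by exact_mod_cast h3
      have hnk' : (k : ℝ) + 2 ≤ n := by exact_mod_cast hnk2
      nlinarith [mul_le_mul_of_nonneg_left h3' (by linarith : (0 : ℝ) ≤ k + 1),
        mul_le_mul_of_nonneg_left hnk' (by linarith : (0 : ℝ) ≤ k - 1)]
  · have h1' : (2 : ℝ) * E ≤ n * k := by exact_mod_cast h1
    have hn0 : (0 : ℝ) ≤ n := by positivity
    have hc : (0 : ℝ) ≤ (k - 2) * (k + 1) := by nlinarith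
    have hq : (0 : ℝ) ≤ (k - 2) * (k - 1) := by nlinarith
    nlinarith [mul_le_mul_of_nonneg_left h1' hc, mul_nonneg hn0 hq]

/-- The bound `α'(G) ≥ a* |V| + b* |E| - O(1)`, multiplied by `2 k (k² - 3)`. -/
theorem lower_bound {V : Type u} [Finite V] (G : SimpleGraph V) (hG : G.Connected) {k : ℕ}
    (hk : 3 ≤ k) (hodd : Odd k) (hdeg : ∀ v, (G.neighborSet v).ncard ≤ k) :
    2 * ((k : ℝ) - 1) * Nat.card V + 2 * (k - 2) * (k + 1) * G.edgeSet.ncard ≤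
      k * (k ^ 2 - 3) * (2 * matchingNumber G + 1) + 2 * (k - 1) := by
  classical
  have := hG.nonempty
  obtain ⟨L, _, l, hl, hs, hb⟩ := berge G
  have hk' : (3 : ℝ) ≤ k := by exact_mod_cast hk
  have c1 := conn_count G hG l hl hs
  have c2 := hitEdges_le G l k hdeg
  have c3 := edge_split G l hl
  have c4 := card_fiber l
  have c5 := Finset.sum_le_sum fun c (_ : c ∈ (Finset.univ : Finset L)) =>
    part_ineq hk hodd (partGraph_le_deg G l c k hdeg) (partGraph_le_self G l c)
  have c6 : {c : L | Odd (fiber l (some c)).ncard}.ncard =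
      ∑ c : L, if Odd (fiber l (some c)).ncard then 1 else 0 := by
    rw [Set.ncard_eq_toFinset_card']
    simp
  rw [c6] at hb
  rw [Nat.card_eq_fintype_card] at c1
  simp only [Finset.sum_add_distrib, ← Finset.mul_sum, Finset.sum_sub_distrib, Finset.sum_const,
    Finset.card_univ, nsmul_eq_mul, mul_one] at c5
  have d1 : (((fiber l none).ncard : ℝ)) + Fintype.card L ≤ (hitEdges G l).ncard + 1 := by exact_mod_cast c1
  have d2 : ((hitEdges G l).ncard : ℝ) ≤ k * (fiber l none).ncard := by exact_mod_cast c2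
  have d3 : (G.edgeSet.ncard : ℝ) = (hitEdges G l).ncard + ∑ c, ((partGraph G l c).edgeSet.ncard : ℝ) := by
    exact_mod_cast c3
  have d4 : (Nat.card V : ℝ) = (fiber l none).ncard + ∑ c, ((fiber l (some c)).ncard : ℝ) := by
    exact_mod_cast c4
  have d5 : (Nat.card V : ℝ) + (fiber l none).ncard ≤ 2 * matchingNumber G +
      (∑ c : L, if Odd (fiber l (some c)).ncard then (1 : ℝ) else 0) + 1 := by
    exact_mod_cast hb
  have hD : (0 : ℝ) ≤ k * (k ^ 2 - 3) := by nlinarith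
  -- The multipliers `2 (k - 1)` and `2 (k² - 3)` make the terms in `S`, `L` and
  -- `hitEdges G l` cancel.
  have f1 := mul_le_mul_of_nonneg_left d1 (by linarith : (0 : ℝ) ≤ 2 * (k - 1))
  have f2 := mul_le_mul_of_nonneg_left d2 (by nlinarith : (0 : ℝ) ≤ 2 * (k ^ 2 - 3))
  have f5 := mul_le_mul_of_nonneg_left d5 hD
  rw [d4] at f5 ⊢
  rw [d3]
  generalize (∑ c : L, if Odd (fiber l (some c)).ncard then (1 : ℝ) else 0) = o at *
  generalize (∑ c, ((fiber l (some c)).ncard : ℝ)) = nn at *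
  generalize (∑ c, ((partGraph G l c).edgeSet.ncard : ℝ)) = ee at *
  linarith

/-! ### The skeleton: hubs in a cyclic arrangement -/

/-- The hub `i` is adjacent to the vertices `(i, o)`. The vertex `(i, none)` is also adjacent to the
hub `i + 1`; the vertices `(i, some x)` are leaves. -/
def skel (Z X : Type) [Ring Z] : SimpleGraph (Z ⊕ Z × Option X) where
  Adj
    | Sum.inl i, Sum.inr p => i = p.1 ∨ p.2 = none ∧ i = p.1 + 1
    | Sum.inr p, Sum.inl i => i = p.1 ∨ p.2 = none ∧ i = p.1 + 1
    | _, _ => False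
  symm := ⟨by rintro (i | p) (j | q) h <;> exact h⟩
  loopless := ⟨by rintro (i | p) h <;> exact h⟩

section skel

variable {Z X : Type} [Ring Z]

lemma skel_inl [Finite X] [Nontrivial Z] (i : Z) :
    ((skel Z X).neighborSet (Sum.inl i)).ncard = Nat.card X + 2 := by
  let f : Option (Option X) → Z ⊕ Z × Option X :=
    fun o => o.elim (Sum.inr (i - 1, none)) fun x => Sum.inr (i, x)
  have hf : Function.Injective f := by
    rintro (_ | o) (_ | o') h <;> simp_all [f]
    exact one_ne_zero (sub_eq_self.1 h.1.symm)
  have hr : (skel Z X).neighborSet (Sum.inl i) = Set.range f := by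
    ext x
    constructor
    · rcases x with j | ⟨j, o⟩
      · exact fun h => h.elim
      · rintro (h | ⟨h, h'⟩)
        · exact ⟨some o, by simp at h; simp [f, h]⟩
        · exact ⟨none, by simp at h h'; simp [f, h, h']⟩
    · rintro ⟨_ | o, rfl⟩
      · exact Or.inr ⟨rfl, by simp⟩
      · exact Or.inl rfl
  rw [hr, Set.ncard_range_of_injective hf, Finite.card_option, Finite.card_option]

lemma skel_none [Nontrivial Z] (j : Z) :
    ((skel Z X).neighborSet (Sum.inr (j, none))).ncard = 2 := by
  have : (skel Z X).neighborSet (Sum.inr (j, none)) = {Sum.inl j, Sum.inl (j + 1)} := by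
    ext x
    rcases x with i | p
    · simp [skel]
    · simp [skel]
  rw [this, Set.ncard_pair]
  simp

lemma skel_some (j : Z) (x : X) :
    ((skel Z X).neighborSet (Sum.inr (j, some x))).ncard = 1 := by
  have : (skel Z X).neighborSet (Sum.inr (j, some x)) = {Sum.inl j} := by
    ext x
    rcases x with i | p
    · simp [skel]
    · simp [skel]
  rw [this, Set.ncard_singleton]

lemma skel_edges [Fintype Z] [Fintype X] [Nontrivial Z] :
    (skel Z X).edgeSet.ncard = Fintype.card Z * (Fintype.card X + 2) := by
  have h := sum_ncard_neighborSet (skel Z X)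
  rw [Fintype.sum_sum_type, Fintype.sum_prod_type] at h
  simp only [Fintype.sum_option, skel_inl, skel_none, skel_some, Finset.sum_const, Finset.card_univ,
    Nat.card_eq_fintype_card, smul_eq_mul] at h
  linarith

lemma skel_connected (N : ℕ) : (skel (ZMod (N + 2)) X).Connected := by
  have h1 : ∀ n : ℕ, (skel (ZMod (N + 2)) X).Reachable (Sum.inl 0) (Sum.inl n) := by
    intro n
    induction n with
    | zero => rw [Nat.cast_zero]
    | succ n ih =>
      refine ih.trans ((Adj.reachable (v := Sum.inr ((n : ZMod (N + 2)), none)) (Or.inl rfl)).trans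
        (Adj.reachable (Or.inr ⟨rfl, ?_⟩)))
      simp
  have h2 : ∀ x, (skel (ZMod (N + 2)) X).Reachable (Sum.inl 0) x := by
    rintro (i | ⟨i, o⟩)
    · obtain ⟨n, rfl⟩ := ZMod.natCast_zmod_surjective i
      exact h1 n
    · obtain ⟨n, rfl⟩ := ZMod.natCast_zmod_surjective i
      exact (h1 n).trans (Adj.reachable (Or.inl rfl))
  exact ⟨fun x y => (h2 x).symm.trans (h2 y)⟩

end skel

/-! ### Attaching blobs -/

/-- For every `p : P`, a copy of `H` is attached to `G` by an edge from the vertex `att p` to the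
copy of `b₀`. -/
def attach {V P B : Type} (G : SimpleGraph V) (att : P → V) (H : SimpleGraph B) (b₀ : B) :
    SimpleGraph (V ⊕ P × B) where
  Adj
    | Sum.inl u, Sum.inl v => G.Adj u v
    | Sum.inl u, Sum.inr q => att q.1 = u ∧ q.2 = b₀
    | Sum.inr q, Sum.inl u => att q.1 = u ∧ q.2 = b₀
    | Sum.inr q, Sum.inr r => q.1 = r.1 ∧ H.Adj q.2 r.2
  symm := ⟨by
    rintro (u | p) (v | q) h
    exacts [h.symm, h, h, ⟨h.1.symm, h.2.symm⟩]⟩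
  loopless := ⟨by
    rintro (u | p) h
    exacts [h.ne rfl, h.2.ne rfl]⟩

section attach

variable {V P B : Type} (G : SimpleGraph V) (att : P → V) (H : SimpleGraph B) (b₀ : B)

lemma attach_inl [Finite V] [Finite P] [Finite B] (u : V) :
    ((attach G att H b₀).neighborSet (Sum.inl u)).ncard =
      (G.neighborSet u).ncard + {p | att p = u}.ncard := by
  have : (attach G att H b₀).neighborSet (Sum.inl u) =
      Sum.inl '' G.neighborSet u ∪ (fun p => Sum.inr (p, b₀)) '' {p | att p = u} := by
    ext x
    rcases x with v | ⟨p, b⟩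
    · simp [attach]
    · simp [attach, eq_comm]
  rw [this, Set.ncard_union_eq _ (Set.toFinite _) (Set.toFinite _),
    Set.ncard_image_of_injective _ Sum.inl_injective, Set.ncard_image_of_injective]
  · intro p q h
    simpa using h
  · refine Set.disjoint_left.2 ?_
    rintro _ ⟨v, _, rfl⟩ ⟨p, _, hp⟩
    cases hp

lemma attach_inr_base [Finite B] (p : P) :
    ((attach G att H b₀).neighborSet (Sum.inr (p, b₀))).ncard = (H.neighborSet b₀).ncard + 1 := by
  have : (attach G att H b₀).neighborSet (Sum.inr (p, b₀)) =
      insert (Sum.inl (att p)) ((fun b => Sum.inr (p, b)) '' H.neighborSet b₀) := by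
    ext x
    rcases x with v | ⟨q, c⟩
    · simp [attach, eq_comm]
    · simp only [mem_neighborSet, attach, Set.mem_insert_iff, Set.mem_image, Sum.inr.injEq,
        Prod.mk.injEq, reduceCtorEq, false_or]
      grind
  rw [this, Set.ncard_insert_of_notMem, Set.ncard_image_of_injective]
  · intro p q h
    simpa using h
  · simp

lemma attach_inr (p : P) (b : B) (hb : b ≠ b₀) :
    ((attach G att H b₀).neighborSet (Sum.inr (p, b))).ncard = (H.neighborSet b).ncard := by
  have : (attach G att H b₀).neighborSet (Sum.inr (p, b)) =
      (fun b => Sum.inr (p, b)) '' H.neighborSet b := by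
    ext x
    rcases x with v | ⟨q, c⟩
    · simp [attach, hb]
    · simp only [mem_neighborSet, attach, Set.mem_image, Sum.inr.injEq,
        Prod.mk.injEq]
      grind
  rw [this, Set.ncard_image_of_injective]
  intro p q h
  simpa using h

lemma attach_connected (hG : G.Connected) (hH : H.Connected) :
    (attach G att H b₀).Connected := by
  have hG' : ∀ u v, (attach G att H b₀).Reachable (Sum.inl u) (Sum.inl v) := fun u v =>
    (hG.preconnected u v).map (⟨Sum.inl, fun h => h⟩ : G →g attach G att H b₀)
  have hH' : ∀ p b, (attach G att H b₀).Reachable (Sum.inl (att p)) (Sum.inr (p, b)) := fun p b =>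
    (Adj.reachable (G := attach G att H b₀) (u := Sum.inl (att p)) (v := Sum.inr (p, b₀)) ⟨rfl, rfl⟩).trans
    ((hH.preconnected b₀ b).map (⟨fun b => Sum.inr (p, b), fun h => ⟨rfl, h⟩⟩ : H →g attach G att H b₀))
  obtain ⟨v₀⟩ := hG.nonempty
  have h : ∀ x, (attach G att H b₀).Reachable (Sum.inl v₀) x := by
    rintro (u | ⟨p, b⟩)
    · exact hG' _ _
    · exact (hG' _ _).trans (hH' p b)
  have : Nonempty (V ⊕ P × B) := ⟨Sum.inl v₀⟩
  exact ⟨fun x y => (h x).symm.trans (h y)⟩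

end attach

/-- The complement of a blob: a path on three vertices with middle vertex `Sum.inl none`, together
with `t` disjoint edges. -/
def coblob (t : ℕ) : SimpleGraph (Option Bool ⊕ Fin t × Bool) where
  Adj
    | Sum.inl none, Sum.inl (some _) => True
    | Sum.inl (some _), Sum.inl none => True
    | Sum.inr p, Sum.inr q => p.1 = q.1 ∧ p.2 ≠ q.2
    | _, _ => False
  symm := ⟨by
    rintro ((_ | b) | p) ((_ | c) | q) h
    all_goals first | exact h | exact ⟨h.1.symm, h.2.symm⟩⟩
  loopless := ⟨by
    rintro ((_ | b) | p) h
    exacts [h, h, h.2 rfl]⟩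

lemma coblob_base (t : ℕ) : ((coblob t).neighborSet (Sum.inl none)).ncard = 2 := by
  have : (coblob t).neighborSet (Sum.inl none) = {Sum.inl (some true), Sum.inl (some false)} := by
    ext x
    rcases x with (_ | b) | p <;> simp [coblob]
  rw [this, Set.ncard_pair (by simp)]

lemma coblob_other (t : ℕ) (b) (hb : b ≠ Sum.inl none) :
    ((coblob t).neighborSet b).ncard = 1 := by
  rw [Set.ncard_eq_one]
  rcases b with (_ | b) | ⟨j, b⟩
  · exact (hb rfl).elim
  · refine ⟨Sum.inl none, ?_⟩
    ext x
    rcases x with (_ | b) | p <;> simp [coblob]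
  · refine ⟨Sum.inr (j, !b), ?_⟩
    ext x
    rcases x with (_ | b) | ⟨i, c⟩
    · simp [coblob]
    · simp [coblob]
    · cases b <;> cases c <;> simp [coblob, eq_comm]

lemma ncard_neighborSet_compl {V : Type*} [Finite V] (G : SimpleGraph V) (v : V) :
    (Gᶜ.neighborSet v).ncard + ((G.neighborSet v).ncard + 1) = Nat.card V := by
  have h : Gᶜ.neighborSet v = (insert v (G.neighborSet v))ᶜ := by
    ext w
    simp [eq_comm]
  rw [h, ← Set.ncard_insert_of_notMem (a := v) (by simp), add_comm, Set.ncard_add_ncard_compl]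

lemma blob_connected (t : ℕ) : (coblob (t + 1))ᶜ.Connected := by
  have h1 : ∀ o : Option Bool, ∀ p, (coblob (t + 1))ᶜ.Reachable (Sum.inl o) (Sum.inr p) := by
    intro o p
    refine Adj.reachable ?_
    rcases o with _ | b <;> simp [coblob]
  have h2 : ∀ x, (coblob (t + 1))ᶜ.Reachable (Sum.inr (0, true)) x := by
    rintro (o | p)
    · exact (h1 o _).symm
    · exact (h1 none _).symm.trans (h1 none p)
  exact ⟨fun x y => (h2 x).symm.trans (h2 y)⟩

/-! ### The two extremal families -/

/-- Near-trees covered by few vertices of degree `k`. -/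
lemma treelike_example {k : ℕ} (hk : 3 ≤ k) (N : ℕ) :
    ∃ (V : Type) (G : SimpleGraph V), Finite V ∧ G.Connected ∧
      (∀ v, (G.neighborSet v).ncard ≤ k) ∧ Nat.card V = (N + 2) * k ∧
      G.edgeSet.ncard = (N + 2) * k ∧ matchingNumber G ≤ N + 2 := by
  obtain ⟨r, rfl⟩ : ∃ r, k = r + 2 := ⟨k - 2, by omega⟩
  have : Fact (1 < N + 2) := ⟨by omega⟩
  refine ⟨_, skel (ZMod (N + 2)) (Fin r), inferInstance, skel_connected N, ?_, ?_, ?_, ?_⟩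
  · rintro (i | ⟨i, _ | x⟩)
    · rw [skel_inl]; simp
    · rw [skel_none]; omega
    · rw [skel_some]; omega
  · simp; ring
  · rw [skel_edges]; simp
  · have := matchingNumber_le_of_respects (skel (ZMod (N + 2)) (Fin r))
      (fun x => x.elim (fun _ => none) some) (by
        rintro (i | p) (j | q) h c d hc hd
        · cases hc
        · cases hc
        · cases hd
        · exact h.elim)
    refine this.trans (le_of_eq ?_)
    have e0 : fiber (fun x : ZMod (N + 2) ⊕ ZMod (N + 2) × Option (Fin r) =>
        x.elim (fun _ => none) some) none = Set.range Sum.inl := by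
      ext x
      rcases x with i | p <;> simp [fiber]
    have e1 : ∀ c, fiber (fun x : ZMod (N + 2) ⊕ ZMod (N + 2) × Option (Fin r) =>
        x.elim (fun _ => none) some) (some c) = {Sum.inr c} := by
      intro c
      ext x
      rcases x with i | p <;> simp [fiber]
    simp only [e0, e1, Set.ncard_singleton, Set.ncard_range_of_injective Sum.inl_injective]
    simp

/-- `k`-regular graphs of small matching number. -/
lemma regular_example {k : ℕ} (hk : 3 ≤ k) (hodd : Odd k) (N : ℕ) :
    ∃ (V : Type) (G : SimpleGraph V), Finite V ∧ G.Connected ∧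
      (∀ v, (G.neighborSet v).ncard ≤ k) ∧ (Nat.card V : ℝ) = (N + 2) * (k * (k ^ 2 - 3)) ∧
      2 * (G.edgeSet.ncard : ℝ) = k * Nat.card V ∧
      2 * (matchingNumber G : ℝ) ≤ (N + 2) * (2 * (k - 1) + k * (k - 2) * (k + 1)) := by
  classical
  obtain ⟨r, rfl⟩ : ∃ r, k = r + 2 := ⟨k - 2, by omega⟩
  obtain ⟨t, ht⟩ : ∃ t, r + 2 = 2 * (t + 1) + 1 := by
    obtain ⟨s, hs⟩ := hodd
    exact ⟨s - 1, by omega⟩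
  have : Fact (1 < N + 2) := ⟨by omega⟩
  let Z := ZMod (N + 2)
  have hZ : Nontrivial Z := ZMod.nontrivial _
  let G₀ := skel Z (Fin r)
  have hdeg0 : ∀ v, (G₀.neighborSet v).ncard ≤ r + 2 := by
    rintro (i | ⟨i, _ | x⟩)
    · rw [skel_inl]; simp
    · rw [skel_none]; omega
    · rw [skel_some]; omega
  -- Every vertex gets as many blobs as its degree falls short of `k = r + 2`.
  let P := Σ v : Z ⊕ Z × Option (Fin r), Fin (r + 2 - (G₀.neighborSet v).ncard)
  have cZ : Fintype.card Z = N + 2 := ZMod.card _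
  have cP : Fintype.card P + 2 * ((N + 2) * (r + 2)) = (N + 2) * (r + 2) * (r + 2) := by
    have h1 : Fintype.card P = ∑ v, (r + 2 - (G₀.neighborSet v).ncard) := by
      simp [P, Fintype.card_sigma]
    have h2 := sum_ncard_neighborSet G₀
    rw [skel_edges, cZ, Fintype.card_fin] at h2
    rw [h1, ← h2, ← Finset.sum_add_distrib,
      Finset.sum_congr rfl fun v _ => Nat.sub_add_cancel (hdeg0 v)]
    simp [cZ]
    ring
  have cB : Nat.card (Option Bool ⊕ Fin (t + 1) × Bool) = r + 4 := by
    simp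
    omega
  set G := attach G₀ (Sigma.fst : P → _) (coblob (t + 1))ᶜ (Sum.inl none) with hG
  have hreg : ∀ v, (G.neighborSet v).ncard = r + 2 := by
    rintro (v | ⟨p, b⟩)
    · rw [hG, attach_inl]
      have : {p : P | p.1 = v}.ncard = r + 2 - (G₀.neighborSet v).ncard := by
        have e : {p : P | p.1 = v} = Set.range (Sigma.mk v) := by
          ext ⟨w, x⟩
          constructor
          · rintro ⟨⟩; exact ⟨x, rfl⟩
          · rintro ⟨y, hy⟩; cases hy; rfl
        rw [e, Set.ncard_range_of_injective sigma_mk_injective]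
        simp
      rw [this]
      have := hdeg0 v
      omega
    · have h1 := ncard_neighborSet_compl (coblob (t + 1)) b
      rw [cB] at h1
      by_cases hb : b = Sum.inl none
      · subst hb
        rw [hG, attach_inr_base]
        rw [coblob_base] at h1
        omega
      · rw [hG, attach_inr _ _ _ _ _ _ hb]
        rw [coblob_other _ _ hb] at h1
        omega
  have cV : Nat.card ((Z ⊕ Z × Option (Fin r)) ⊕ P × (Option Bool ⊕ Fin (t + 1) × Bool)) =
      (N + 2) * (r + 2) + Fintype.card P * (r + 4) := by
    rw [Nat.card_sum, Nat.card_prod P, cB]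
    simp [cZ]
    ring
  have cP' : (Fintype.card P : ℝ) = (N + 2) * (r + 2) * r := by
    have : (Fintype.card P : ℝ) + 2 * ((N + 2) * (r + 2)) = (N + 2) * (r + 2) * (r + 2) := by
      exact_mod_cast cP
    linarith
  refine ⟨_, G, inferInstance, attach_connected _ _ _ _ (skel_connected N) (blob_connected t),
    fun v => (hreg v).le, ?_, ?_, ?_⟩
  · rw [cV]
    push_cast
    rw [cP']
    ring
  · have h := sum_ncard_neighborSet G
    simp only [hreg, Finset.sum_const, Finset.card_univ, smul_eq_mul] at h
    rw [← Nat.card_eq_fintype_card] at h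
    have h' := congrArg (Nat.cast : ℕ → ℝ) h
    push_cast at h' ⊢
    linarith
  -- `S` is the set of non-hubs of the skeleton; hubs and blobs are the parts.
  · let l : (Z ⊕ Z × Option (Fin r)) ⊕ P × (Option Bool ⊕ Fin (t + 1) × Bool) → Option (Z ⊕ P) :=
      fun x => x.elim (fun y => y.elim (fun i => some (Sum.inl i)) fun _ => none)
        fun q => some (Sum.inr q.1)
    -- No blob is attached to a hub, whose degree is already `k`.
    have hP : ∀ (p : P) i, p.1 ≠ Sum.inl i := by
      rintro ⟨_, x⟩ i rfl
      have := x.pos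
      have h : (G₀.neighborSet (Sum.inl i)).ncard = r + 2 := by
        rw [skel_inl]; simp
      omega
    have hl : Respects G l := by
      rintro ((i | p) | q) ((j | p') | q') h c d hc hd
      · exact h.elim
      · cases hd
      · exact (hP _ _ h.1).elim
      · cases hc
      · cases hc
      · cases hc
      · exact (hP _ _ h.1).elim
      · cases hd
      · have : q.1 = q'.1 := h.1
        simp only [l, Sum.elim_inr, Option.some.injEq] at hc hd
        rw [← hc, ← hd, this]
    have e0 : fiber l none = (fun p => Sum.inl (Sum.inr p)) '' Set.univ := by
      ext x
      rcases x with (i | p) | q <;> simp [fiber, l]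
    have e1 : ∀ i, fiber l (some (Sum.inl i)) = {Sum.inl (Sum.inl i)} := by
      intro i
      ext x
      rcases x with (i | p) | q <;> simp [fiber, l]
    have e2 : ∀ p, fiber l (some (Sum.inr p)) = (fun b => Sum.inr (p, b)) '' Set.univ := by
      intro p
      ext x
      rcases x with (i | p) | q
      · simp [fiber, l]
      · simp [fiber, l]
      · simp [fiber, l, Prod.ext_iff, eq_comm]
    have h := matchingNumber_le_of_respects G l hl
    rw [Fintype.sum_sum_type] at h
    simp only [e0, e1, e2] at h
    rw [Set.ncard_image_of_injective _ (by intro p q h; simpa using h)] at h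
    have e3 : ∀ p : P, ((fun b => Sum.inr (p, b)) '' Set.univ :
        Set ((Z ⊕ Z × Option (Fin r)) ⊕ P × (Option Bool ⊕ Fin (t + 1) × Bool))).ncard = r + 4 := by
      intro p
      rw [Set.ncard_image_of_injective _ (by intro p q h; simpa using h), Set.ncard_univ, cB]
    simp only [e3, Set.ncard_singleton, Set.ncard_univ, Finset.sum_const, Finset.card_univ] at h
    have e4 : (r + 4) / 2 = t + 2 := by omega
    rw [e4] at h
    simp [cZ] at h
    have h' : (matchingNumber G : ℝ) ≤ (N + 2) * (r + 1) + Fintype.card P * (t + 2) := by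
      exact_mod_cast h
    rw [cP'] at h'
    have ht' : (r : ℝ) + 2 = 2 * (t + 1) + 1 := by exact_mod_cast ht
    have ht2 : (t : ℝ) = (r - 1) / 2 := by linarith
    rw [ht2] at h'
    push_cast
    linarith

lemma le_of_forall_nat {x y T : ℝ} (h : ∀ N : ℕ, ((N : ℝ) + 2) * x - T ≤ (N + 2) * y) : x ≤ y := by
  by_contra! hlt
  obtain ⟨N, hN⟩ := exists_nat_gt (T / (x - y))
  rw [div_lt_iff₀ (by linarith)] at hN
  have := h N
  nlinarith

end MatchBound

/-! ### The theorem -/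

open MatchBound in
theorem stmt_17 (k : ℕ) (hk : 3 ≤ k) (hkodd : Odd k) (a b : ℝ) :
    (a ≤ ((k : ℝ) - 1) / ((k : ℝ) * ((k : ℝ) ^ 2 - 3)) →
      (kGood k a b ↔
        b ≤ ((k : ℝ) ^ 2 - (k : ℝ) - 2) / ((k : ℝ) * ((k : ℝ) ^ 2 - 3))
          + 2 * ((((k : ℝ) - 1) / ((k : ℝ) * ((k : ℝ) ^ 2 - 3)) - a) / (k : ℝ)))) ∧
    (((k : ℝ) - 1) / ((k : ℝ) * ((k : ℝ) ^ 2 - 3)) < a →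
      (kGood k a b ↔
        b ≤ ((k : ℝ) ^ 2 - (k : ℝ) - 2) / ((k : ℝ) * ((k : ℝ) ^ 2 - 3))
          + ((k : ℝ) - 1) / ((k : ℝ) * ((k : ℝ) ^ 2 - 3)) - a)) := by
  have hk' : (3 : ℝ) ≤ k := by exact_mod_cast hk
  have hk0 : (0 : ℝ) < k := by linarith
  have hD : (0 : ℝ) < k * (k ^ 2 - 3) := by
    have : (0 : ℝ) < k ^ 2 - 3 := by nlinarith
    positivity
  set D : ℝ := (k : ℝ) * ((k : ℝ) ^ 2 - 3) with hDdef
  obtain ⟨A, hA⟩ : ∃ A, A = ((k : ℝ) - 1) / D := ⟨_, rfl⟩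
  obtain ⟨B, hB⟩ : ∃ B, B = ((k : ℝ) ^ 2 - (k : ℝ) - 2) / D := ⟨_, rfl⟩
  rw [← hA, ← hB]
  have hA' : D * A = k - 1 := by rw [hA]; field_simp
  have hB' : D * B = k ^ 2 - k - 2 := by rw [hB]; field_simp
  have hlow : ∀ (V : Type) (G : SimpleGraph V), Finite V → G.Connected →
      (∀ v : V, (G.neighborSet v).ncard ≤ k) →
      A * Nat.card V + B * G.edgeSet.ncard - (1 / 2 + A) ≤ matchingNumber G := by
    intro V G _ hG hdeg
    have h := lower_bound G hG hk hkodd hdeg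
    rw [← hDdef] at h
    refine le_of_mul_le_mul_left ?_ hD
    have e : D * (A * Nat.card V + B * G.edgeSet.ncard - (1 / 2 + A)) =
        (D * A) * Nat.card V + (D * B) * G.edgeSet.ncard - (D / 2 + D * A) := by ring
    rw [e, hA', hB']
    linarith
  refine ⟨fun ha => ⟨?_, fun hb => ⟨1 / 2 + A, ?_⟩⟩, fun ha => ⟨?_, fun hb => ⟨1 / 2 + a, ?_⟩⟩⟩
  · rintro ⟨T, hT⟩
    have h : D * (a + b * k / 2) ≤ (2 * (k - 1) + k * (k - 2) * (k + 1)) / 2 := by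
      refine le_of_forall_nat (T := T) fun N => ?_
      obtain ⟨V, G, h1, h2, h3, h4, h5, h6⟩ := regular_example hk hkodd N
      have h7 := hT V G h1 h2 h3
      have h8 : (G.edgeSet.ncard : ℝ) = k * Nat.card V / 2 := by linarith
      rw [h8, h4, ← hDdef] at h7
      linarith
    -- The regular family attains equality in the lower bound, up to a constant.
    have e : ((2 : ℝ) * (k - 1) + k * (k - 2) * (k + 1)) / 2 = D * (A + B * k / 2) := by
      linear_combination -hA' - k / 2 * hB'
    rw [e] at h
    have h' := le_of_mul_le_mul_left h hD
    have e2 : B + 2 * ((A - a) / k) = (2 * (A - a) + B * k) / k := by field_simp; ring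
    rw [e2, le_div_iff₀ hk0]
    linarith
  · intro V G h1 h2 h3
    have h := hlow V G h1 h2 h3
    have := Fintype.ofFinite V
    have hm : 2 * (G.edgeSet.ncard : ℝ) ≤ k * Nat.card V := by
      have : 2 * G.edgeSet.ncard ≤ Nat.card V * k := by
        rw [← sum_ncard_neighborSet, Nat.card_eq_fintype_card, ← smul_eq_mul]
        exact Finset.sum_le_card_nsmul _ _ _ fun v _ => h3 v
      rw [mul_comm (k : ℝ)]
      exact_mod_cast this
    have hm0 : (0 : ℝ) ≤ G.edgeSet.ncard := by positivity
    have hb' := mul_le_mul_of_nonneg_right hb hm0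
    have ha' := mul_le_mul_of_nonneg_left hm (div_nonneg (sub_nonneg.2 ha) hk0.le)
    have e : (A - a) / k * (k * Nat.card V) = (A - a) * Nat.card V := by field_simp
    rw [e] at ha'
    linarith
  · rintro ⟨T, hT⟩
    have h : k * (a + b) ≤ 1 := by
      refine le_of_forall_nat (T := T) fun N => ?_
      obtain ⟨V, G, h1, h2, h3, h4, h5, h6⟩ := treelike_example hk N
      have h7 := hT V G h1 h2 h3
      have h6' : (matchingNumber G : ℝ) ≤ N + 2 := by exact_mod_cast h6
      rw [h4, h5] at h7
      push_cast at h7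
      linarith
    have e : k * (A + B) = 1 := by
      have : (k ^ 2 - 3) * (k * (A + B)) = ((k : ℝ) ^ 2 - 3) * 1 := by
        rw [hDdef] at hA' hB'
        linear_combination hA' + hB'
      exact mul_left_cancel₀ (by nlinarith) this
    rw [← e] at h
    have := le_of_mul_le_mul_left h hk0
    linarith
  · intro V G h1 h2 h3
    have h := hlow V G h1 h2 h3
    have hm : (Nat.card V : ℝ) ≤ G.edgeSet.ncard + 1 := by
      have := h2.card_vert_le_card_edgeSet_add_one
      rw [Nat.card_coe_set_eq] at this
      exact_mod_cast this
    have hm0 : (0 : ℝ) ≤ G.edgeSet.ncard := by positivity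
    have hb' := mul_le_mul_of_nonneg_right hb hm0
    have ha' := mul_le_mul_of_nonneg_left hm (sub_nonneg.2 ha.le)
    linarith
end

section
/- Let k ≥ 4 be an even integer, and set a₁* = 1/(k(k+1)), b₁* = 1/(k+1), a₂* = −(k−2)/(k²+k+2), and b₂* = (k+2)/(k²+k+2). Then for all real numbers a and b: (1) if a ≤ a₂*, the pair (a,b) is k-good if and only if b ≤ b₂* + 2·(a₂*−a)/k; (2) if a > a₁*, the pair (a,b) is k-good if and only if b ≤ b₁* + a₁* − a; (3) if a₂* < a ≤ a₁*, the pair (a,b) is k-good if and only if b ≤ b₂* + (b₁* − b₂*)·(a − a₂*)/(a₁* − a₂*). -/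
namespace MB
open Finset

/-! ### Matchings and the Tutte-Berge bound -/

lemma two_mul_edges {V : Type*} [Fintype V] (G : SimpleGraph V) :
    2 * G.edgeSet.ncard = ∑ v, (G.neighborSet v).ncard := by
  classical
  have h := G.sum_degrees_eq_twice_card_edges
  rw [Set.ncard_eq_toFinset_card', ← SimpleGraph.edgeFinset, ← h]
  refine Finset.sum_congr rfl fun v _ => ?_
  rw [Set.ncard_eq_toFinset_card', ← SimpleGraph.neighborFinset_def, SimpleGraph.card_neighborFinset_eq_degree]

lemma two_mul_matching {V : Type*} [Finite V] {G : SimpleGraph V} {M : G.Subgraph}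
    (hM : M.IsMatching) : 2 * M.edgeSet.ncard = M.verts.ncard := by
  classical
  have := Fintype.ofFinite V
  rw [← SimpleGraph.Subgraph.edgeSet_spanningCoe, two_mul_edges, Set.ncard_eq_toFinset_card',
    Finset.card_eq_sum_ones, ← Finset.sum_subset (Finset.subset_univ M.verts.toFinset)]
  · refine Finset.sum_congr rfl fun v hv => ?_
    obtain ⟨w, hw, hw'⟩ := hM (by simpa using hv : v ∈ M.verts)
    rw [Set.ncard_eq_one]
    refine ⟨w, Set.ext fun x => ⟨fun hx => hw' x (by simpa using hx), ?_⟩⟩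
    rintro rfl
    simpa using hw
  · intro v _ hv
    rw [Set.ncard_eq_zero]
    refine Set.eq_empty_iff_forall_notMem.2 fun x hx => hv ?_
    simpa using M.edge_vert (by simpa using hx : M.Adj v x)

lemma le_matchingNumber {V : Type*} [Finite V] {G : SimpleGraph V} {M : G.Subgraph}
    (hM : M.IsMatching) : M.edgeSet.ncard ≤ matchingNumber G := by
  refine le_csSup ⟨G.edgeSet.ncard, ?_⟩ ⟨M, hM, rfl⟩
  rintro n ⟨M, -, rfl⟩
  exact Set.ncard_le_ncard M.edgeSet_subset (Set.toFinite _)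

lemma matchingNumber_le {V : Type*} {G : SimpleGraph V} {c : ℕ}
    (h : ∀ M : G.Subgraph, M.IsMatching → M.edgeSet.ncard ≤ c) : matchingNumber G ≤ c := by
  refine csSup_le ⟨0, ⊥, ?_, ?_⟩ ?_
  · intro v hv; simp at hv
  · simp
  · rintro n ⟨M, hM, rfl⟩
    exact h M hM

/-- The spanning subgraph of `G` obtained by deleting all edges that meet `S`. -/
def cut {V : Type*} (G : SimpleGraph V) (S : Set V) : SimpleGraph V where
  Adj u v := G.Adj u v ∧ u ∉ S ∧ v ∉ S
  symm := ⟨fun _ _ h => ⟨h.1.symm, h.2.2, h.2.1⟩⟩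
  loopless := ⟨fun _ h => G.loopless.irrefl _ h.1⟩

/-- The join of `G` with a complete graph on `d` new vertices. -/
def cone {V : Type*} (G : SimpleGraph V) (d : ℕ) : SimpleGraph (V ⊕ Fin d) where
  Adj x y := x ≠ y ∧ ∀ u v, x = Sum.inl u → y = Sum.inl v → G.Adj u v
  symm := ⟨fun _ _ h => ⟨h.1.symm, fun u v hu hv => (h.2 v u hv hu).symm⟩⟩
  loopless := ⟨fun _ h => h.1 rfl⟩

lemma cone_inl {V : Type*} {G : SimpleGraph V} {d : ℕ} {u v : V}
    (h : (cone G d).Adj (Sum.inl u) (Sum.inl v)) : G.Adj u v := h.2 u v rfl rfl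

/-- A perfect matching of the join with `d` new vertices leaves at most `d` vertices of `G`
unmatched once the new vertices are removed. -/
lemma card_le_of_perfect {V : Type*} [Finite V] (G : SimpleGraph V) (d : ℕ)
    {M : (cone G d).Subgraph} (hM : M.IsPerfectMatching) :
    Nat.card V ≤ 2 * matchingNumber G + d := by
  classical
  have := Fintype.ofFinite V
  obtain ⟨hm, hs⟩ := hM
  let M' : G.Subgraph :=
    { verts := {v | ∃ w, M.Adj (Sum.inl v) (Sum.inl w)}
      Adj := fun u v => M.Adj (Sum.inl u) (Sum.inl v)
      adj_sub := fun h => cone_inl (M.adj_sub h)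
      edge_vert := fun {u v} h => ⟨v, h⟩
      symm := ⟨fun _ _ h => h.symm⟩ }
  have hM' : M'.IsMatching := by
    rintro v ⟨w, hw⟩
    exact ⟨w, hw, fun y hy => Sum.inl_injective (hm.eq_of_adj_left hy hw)⟩
  have h1 := le_matchingNumber hM'
  have h2 := two_mul_matching hM'
  have h3 : (M'.verts)ᶜ.ncard ≤ d := by
    have hex : ∀ v : V, v ∈ (M'.verts)ᶜ → ∃ j : Fin d, M.Adj (Sum.inl v) (Sum.inr j) := by
      intro v hv
      obtain ⟨w, hw, -⟩ := hm (hs (Sum.inl v))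
      rcases w with w | j
      · exact absurd ⟨w, hw⟩ hv
      · exact ⟨j, hw⟩
    have hex' : ∀ v : ↥(M'.verts)ᶜ, ∃ j : Fin d, M.Adj (Sum.inl v.1) (Sum.inr j) :=
      fun v => hex v.1 v.2
    choose f hf using hex'
    have hinj : Function.Injective f := fun a b hab => by
      have h1 := hf a
      rw [hab] at h1
      exact Subtype.ext (Sum.inl_injective (hm.eq_of_adj_right h1 (hf b)))
    have := Nat.card_le_card_of_injective f hinj
    rwa [Nat.card_coe_set_eq, Nat.card_fin] at this
  have h4 := Set.ncard_add_ncard_compl M'.verts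
  omega

/-- The join with a vertex set `U` containing all new vertices removed embeds in `cut G (U ∩ V)`;
its image is closed under adjacency, hence a union of components. -/
lemma reach_cut {V : Type*} {G : SimpleGraph V} {S : Set V} {d : ℕ} {U : Set (V ⊕ Fin d)}
    (hU : ∀ j, Sum.inr j ∈ U) (hS : S = Sum.inl ⁻¹' U) :
    ∃ φ : (((⊤ : (cone G d).Subgraph).deleteVerts U).coe) →g cut G S,
      (∀ x, (Sum.inl (φ x) : V ⊕ Fin d) = x.1) ∧
      ∀ x v, (cut G S).Adj (φ x) v → ∃ y, φ y = v ∧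
        ((⊤ : (cone G d).Subgraph).deleteVerts U).coe.Adj x y := by
  subst hS
  have hx : ∀ x : ((⊤ : (cone G d).Subgraph).deleteVerts U).verts, ∃ v, Sum.inl v = x.1 := by
    rintro ⟨v | j, h⟩
    · exact ⟨v, rfl⟩
    · exact absurd (hU j) h.2
  choose f hf using hx
  refine ⟨⟨f, ?_⟩, hf, ?_⟩
  · intro x y hxy
    have h1 := hxy
    simp only [SimpleGraph.Subgraph.coe_adj, SimpleGraph.Subgraph.deleteVerts_adj,
      SimpleGraph.Subgraph.top_adj, ← hf] at h1
    exact ⟨cone_inl h1.2.2.2.2, h1.2.1, h1.2.2.2.1⟩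
  · intro x v hv
    refine ⟨⟨Sum.inl v, trivial, hv.2.2⟩, ?_, ?_⟩
    · exact Sum.inl_injective (hf _)
    · simp only [SimpleGraph.Subgraph.coe_adj, SimpleGraph.Subgraph.deleteVerts_adj,
        SimpleGraph.Subgraph.top_adj, ← hf x]
      refine ⟨trivial, hv.2.1, trivial, hv.2.2, ?_, ?_⟩
      · intro h
        exact hv.1.ne (Sum.inl_injective h)
      · intro a b ha hb
        cases ha; cases hb
        exact hv.1

/-- If `U` contains all cone vertices, then cutting `U ∩ V` out of `G` gives all odd components
of the join minus `U`, and in addition one singleton for each vertex of `U ∩ V`. -/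
lemma odd_cut {V : Type*} [Finite V] {G : SimpleGraph V} {S : Set V} {d : ℕ}
    {U : Set (V ⊕ Fin d)} (hU : ∀ j, Sum.inr j ∈ U) (hS : S = Sum.inl ⁻¹' U) :
    (((⊤ : (cone G d).Subgraph).deleteVerts U).coe).oddComponents.ncard + S.ncard
      ≤ (cut G S).oddComponents.ncard := by
  obtain ⟨φ, h1, h2⟩ := reach_cut (G := G) hU hS
  have hinj : Function.Injective φ := by
    intro x y hxy
    apply Subtype.ext
    rw [← h1, ← h1, hxy]
  have hnot : ∀ x, φ x ∉ S := by
    intro x hx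
    have hx' : φ x ∈ Sum.inl ⁻¹' U := hS ▸ hx
    rw [Set.mem_preimage, h1] at hx'
    exact x.2.2 hx'
  have hwalk : ∀ {u v} (p : (cut G S).Walk u v), ∀ x, φ x = u → ∃ y, φ y = v ∧
      (((⊤ : (cone G d).Subgraph).deleteVerts U).coe).Reachable x y := by
    intro u v p
    induction p with
    | nil => exact fun x hx => ⟨x, hx, SimpleGraph.Reachable.refl x⟩
    | cons h p ih =>
      rintro x rfl
      obtain ⟨y, hy, hxy⟩ := h2 x _ h
      obtain ⟨z, hz, hyz⟩ := ih y hy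
      exact ⟨z, hz, hxy.reachable.trans hyz⟩
  have hsupp : ∀ c, (SimpleGraph.ConnectedComponent.map φ c).supp = φ '' c.supp := by
    intro c
    induction c using SimpleGraph.ConnectedComponent.ind with | _ x
    ext v
    simp only [SimpleGraph.ConnectedComponent.map_mk, SimpleGraph.ConnectedComponent.mem_supp_iff,
      SimpleGraph.ConnectedComponent.eq, Set.mem_image]
    constructor
    · rintro hv
      obtain ⟨p⟩ := hv.symm
      obtain ⟨y, hy, hxy⟩ := hwalk p x rfl
      exact ⟨y, hxy.symm, hy⟩
    · rintro ⟨y, hy, rfl⟩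
      exact hy.map φ
  have hfinj : Function.Injective (SimpleGraph.ConnectedComponent.map φ) := by
    intro c c' h
    apply SimpleGraph.ConnectedComponent.supp_injective
    apply hinj.image_injective
    rw [← hsupp, ← hsupp, h]
  have hsing : ∀ v ∈ S, ((cut G S).connectedComponentMk v).supp = {v} := by
    intro v hv
    ext w
    simp only [SimpleGraph.ConnectedComponent.mem_supp_iff, SimpleGraph.ConnectedComponent.eq,
      Set.mem_singleton_iff]
    constructor
    · intro h
      by_contra hne
      obtain ⟨y, hy⟩ := h.nonempty_neighborSet_right hne
      exact hy.2.1 hv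
    · rintro rfl; rfl
  have hginj : Set.InjOn (cut G S).connectedComponentMk S := by
    intro v hv w hw h
    have := hsing v hv
    rw [h, hsing w hw] at this
    exact (Set.singleton_injective this).symm
  rw [← Set.ncard_image_of_injective _ hfinj, ← Set.InjOn.ncard_image hginj,
    ← Set.ncard_union_eq _ (Set.toFinite _) (Set.toFinite _)]
  · apply Set.ncard_le_ncard _ (Set.toFinite _)
    rintro c (⟨c, hc, rfl⟩ | ⟨v, hv, rfl⟩)
    · change Odd (Set.ncard _)
      rw [hsupp, Set.ncard_image_of_injective _ hinj]
      exact hc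
    · change Odd (Set.ncard _)
      rw [hsing v hv]
      simp
  · rw [Set.disjoint_left]
    rintro _ ⟨c, hc, rfl⟩ ⟨v, hv, h⟩
    have := hsing v hv
    rw [h, hsupp] at this
    have hv' : v ∈ φ '' c.supp := by rw [this]; rfl
    obtain ⟨x, -, rfl⟩ := hv'
    exact hnot x hv

/-- The nontrivial half of the Tutte-Berge formula, up to an additive error of one. -/
lemma tutte_berge {V : Type*} [Finite V] (G : SimpleGraph V) :
    ∃ S : Set V, Nat.card V + 2 * S.ncard
      ≤ 2 * matchingNumber G + 1 + (cut G S).oddComponents.ncard := by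
  -- `d` is two less than the number of vertices missed by a maximum matching: too few for the join
  -- to have a perfect matching, and of the parity that gives it an even number of vertices.
  by_cases hsmall : Nat.card V ≤ 2 * matchingNumber G + 1
  · exact ⟨∅, by rw [Set.ncard_empty]; omega⟩
  obtain ⟨d, hd⟩ : ∃ d, Nat.card V = 2 * matchingNumber G + 2 + d :=
    ⟨Nat.card V - (2 * matchingNumber G + 2), by omega⟩
  have hno : ¬ ∃ M : (cone G d).Subgraph, M.IsPerfectMatching := by
    rintro ⟨M, hM⟩
    have := card_le_of_perfect G d hM
    omega
  rw [SimpleGraph.tutte] at hno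
  push Not at hno
  obtain ⟨U, hU⟩ := hno
  unfold SimpleGraph.IsTutteViolator at hU
  have hcard : Nat.card (V ⊕ Fin d) = 2 * (matchingNumber G + 1 + d) := by
    rw [Nat.card_sum, hd, Nat.card_fin]; omega
  by_cases hall : ∀ j, Sum.inr j ∈ U
  · refine ⟨Sum.inl ⁻¹' U, ?_⟩
    have h1 := odd_cut (G := G) hall rfl
    have h2 : U.ncard = (Sum.inl ⁻¹' U : Set V).ncard + d := by
      have : U = Sum.inl '' (Sum.inl ⁻¹' U : Set V) ∪ Set.range (Sum.inr : Fin d → V ⊕ Fin d) := by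
        ext (v | j)
        · simp
        · simp [hall]
      conv_lhs => rw [this]
      rw [Set.ncard_union_eq _ (Set.toFinite _) (Set.toFinite _),
        Set.ncard_image_of_injective _ Sum.inl_injective, ← Set.image_univ,
        Set.ncard_image_of_injective _ Sum.inr_injective, Set.ncard_univ, Nat.card_fin]
      rw [Set.disjoint_left]
      rintro _ ⟨v, -, rfl⟩ ⟨j, hj⟩
      cases hj
    omega
  · -- A surviving new vertex is joined to everything, so at most one odd component is left, and
    -- parity excludes `U = ∅`.
    exfalso
    push Not at hall
    obtain ⟨j, hj⟩ := hall
    have hconn : (((⊤ : (cone G d).Subgraph).deleteVerts U).coe).Preconnected := by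
      have key : ∀ x, (((⊤ : (cone G d).Subgraph).deleteVerts U).coe).Reachable
          ⟨Sum.inr j, trivial, hj⟩ x := by
        intro x
        by_cases hx : x = ⟨Sum.inr j, trivial, hj⟩
        · rw [hx]
        · apply SimpleGraph.Adj.reachable
          simp only [SimpleGraph.Subgraph.coe_adj, SimpleGraph.Subgraph.deleteVerts_adj,
            SimpleGraph.Subgraph.top_adj]
          refine ⟨trivial, hj, trivial, x.2.2, fun h => hx (Subtype.ext h.symm), ?_⟩
          intro u v hu
          cases hu
      exact fun x y => (key x).symm.trans (key y)
    have hsub := hconn.subsingleton_connectedComponent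
    have hle := Set.ncard_le_one_of_subsingleton
      (((⊤ : (cone G d).Subgraph).deleteVerts U).coe).oddComponents
    have h1 : (((⊤ : (cone G d).Subgraph).deleteVerts U).coe).oddComponents.ncard = 1 := by omega
    have h0 : U = ∅ := by
      rw [← Set.ncard_eq_zero]; omega
    have hodd := (SimpleGraph.odd_ncard_oddComponents
      (((⊤ : (cone G d).Subgraph).deleteVerts U).coe)).1 (by rw [h1]; exact odd_one)
    subst h0
    simp only [SimpleGraph.Subgraph.deleteVerts_empty, SimpleGraph.Subgraph.verts_top,
      Nat.card_univ, hcard] at hodd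
    exact (Nat.not_odd_iff_even.2 (even_two_mul _)) hodd

/-! ### Counting edges and components after cutting -/

/-- A vertex of `S` is isolated in `cut G S`. -/
lemma cut_supp {V : Type*} {G : SimpleGraph V} {S : Set V} {v : V} (hv : v ∈ S) (w : V) :
    (cut G S).connectedComponentMk w = (cut G S).connectedComponentMk v ↔ w = v := by
  rw [SimpleGraph.ConnectedComponent.eq]
  constructor
  · intro h
    by_contra hne
    obtain ⟨y, hy⟩ := h.nonempty_neighborSet_right hne
    exact hy.2.1 hv
  · rintro rfl; rfl

lemma cut_le {V : Type*} (G : SimpleGraph V) (S : Set V) : cut G S ≤ G := fun _ _ h => h.1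

/-- Contracting the components of a spanning subgraph `H` of a connected graph `G` leaves a
connected graph whose edges come from edges of `G` outside `H`. -/
lemma card_comp_le {V : Type*} [Finite V] {G H : SimpleGraph V} (hG : G.Connected) (hle : H ≤ G) :
    Nat.card H.ConnectedComponent + H.edgeSet.ncard ≤ G.edgeSet.ncard + 1 := by
  let Q : SimpleGraph H.ConnectedComponent :=
    { Adj := fun c c' => c ≠ c' ∧ ∃ u v, H.connectedComponentMk u = c ∧
        H.connectedComponentMk v = c' ∧ G.Adj u v
      symm := ⟨fun _ _ h => ⟨h.1.symm, by
        obtain ⟨u, v, hu, hv, h⟩ := h.2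
        exact ⟨v, u, hv, hu, h.symm⟩⟩⟩
      loopless := ⟨fun _ h => h.1 rfl⟩ }
  have hwalk : ∀ {u v} (_ : G.Walk u v),
      Q.Reachable (H.connectedComponentMk u) (H.connectedComponentMk v) := by
    intro u v p
    induction p with
    | nil => exact SimpleGraph.Reachable.refl _
    | @cons a b c h p ih =>
      refine SimpleGraph.Reachable.trans ?_ ih
      by_cases hab : H.connectedComponentMk a = H.connectedComponentMk b
      · rw [hab]
      · exact SimpleGraph.Adj.reachable ⟨hab, a, b, rfl, rfl, h⟩
  have hne := hG.nonempty
  have hQ : Q.Connected := by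
    refine ⟨fun c c' => ?_⟩
    induction c using SimpleGraph.ConnectedComponent.ind
    induction c' using SimpleGraph.ConnectedComponent.ind
    obtain ⟨p⟩ := hG.preconnected _ _
    exact hwalk p
  have h1 := hQ.card_vert_le_card_edgeSet_add_one
  rw [Nat.card_coe_set_eq] at h1
  have h2 : Q.edgeSet ⊆ Sym2.map H.connectedComponentMk '' (G.edgeSet \ H.edgeSet) := by
    intro e
    induction e using Sym2.ind with | _ c c'
    rintro ⟨hcc, u, v, rfl, rfl, huv⟩
    refine ⟨s(u, v), ⟨huv, fun h => hcc ?_⟩, rfl⟩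
    exact SimpleGraph.ConnectedComponent.connectedComponentMk_eq_of_adj h
  have h3 := (Set.ncard_le_ncard h2 (Set.toFinite _)).trans (Set.ncard_image_le (Set.toFinite _))
  have h4 := Set.ncard_sdiff_add_ncard_of_subset (SimpleGraph.edgeSet_mono hle) (Set.toFinite _)
  omega

lemma edges_cut {V : Type*} [Finite V] {G : SimpleGraph V} {k : ℕ}
    (hdeg : ∀ v, (G.neighborSet v).ncard ≤ k) (S : Set V) :
    G.edgeSet.ncard ≤ (cut G S).edgeSet.ncard + k * S.ncard := by
  classical
  have := Fintype.ofFinite V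
  have h4 := Set.ncard_sdiff_add_ncard_of_subset (SimpleGraph.edgeSet_mono (cut_le G S))
    (Set.toFinite _)
  suffices h : (G.edgeSet \ (cut G S).edgeSet).ncard ≤ k * S.ncard by omega
  have h5 : (G.edgeSet \ (cut G S).edgeSet) ⊆
      ((S.toFinset.biUnion fun v => G.incidenceFinset v : Finset (Sym2 V)) : Set (Sym2 V)) := by
    intro e
    induction e using Sym2.ind with | _ u v
    rintro ⟨h, h'⟩
    have : u ∈ S ∨ v ∈ S := by
      by_contra hc
      push Not at hc
      exact h' ⟨h, hc⟩
    have huv : G.Adj u v := h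
    simp only [coe_biUnion, Set.mem_iUnion]
    rcases this with h1 | h1
    · exact ⟨u, by simpa using h1, by simpa [SimpleGraph.incidenceSet] using huv⟩
    · exact ⟨v, by simpa using h1, by simpa [SimpleGraph.incidenceSet] using huv⟩
  refine (Set.ncard_le_ncard h5 (Set.toFinite _)).trans ?_
  rw [Set.ncard_coe_finset]
  refine (Finset.card_biUnion_le_card_mul _ _ k fun v _ => ?_).trans ?_
  · rw [SimpleGraph.card_incidenceFinset_eq_degree, ← SimpleGraph.card_neighborFinset_eq_degree,
      SimpleGraph.neighborFinset_def, ← Set.ncard_eq_toFinset_card']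
    exact hdeg v
  · rw [Set.ncard_eq_toFinset_card', mul_comm]

/-! ### Estimates for one component, and the extreme pairs -/

lemma sum_fibers {V C : Type*} [Fintype V] [Fintype C] (π : V → C) (f : V → ℕ)
    [∀ c, DecidablePred fun v => π v = c] :
    ∑ c, ∑ v with π v = c, f v = ∑ v, f v := by
  classical
  rw [← Finset.sum_fiberwise _ π f]
  refine Finset.sum_congr rfl fun c _ => Finset.sum_congr ?_ fun _ _ => rfl
  ext; simp

/-- The degree sum within one component is even. -/
lemma comp_edges_even {V : Type*} [Fintype V] (H : SimpleGraph V) (c : H.ConnectedComponent)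
    [DecidablePred fun v => H.connectedComponentMk v = c] :
    Even (∑ v with H.connectedComponentMk v = c, (H.neighborSet v).ncard) := by
  let K : SimpleGraph V :=
    { Adj := fun u v => H.Adj u v ∧ H.connectedComponentMk u = c ∧ H.connectedComponentMk v = c
      symm := ⟨fun _ _ h => ⟨h.1.symm, h.2.2, h.2.1⟩⟩
      loopless := ⟨fun _ h => h.1.ne rfl⟩ }
  have h := two_mul_edges K
  have h2 : ∑ v, (K.neighborSet v).ncard
      = ∑ v with H.connectedComponentMk v = c, (H.neighborSet v).ncard := by
    rw [Finset.sum_filter]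
    refine Finset.sum_congr rfl fun v _ => ?_
    split_ifs with hv
    · congr 1
      ext w
      refine ⟨fun h => h.1, fun h => ⟨h, hv, ?_⟩⟩
      rw [← hv]
      exact (SimpleGraph.ConnectedComponent.connectedComponentMk_eq_of_adj h).symm
    · rw [Set.ncard_eq_zero]
      exact Set.eq_empty_iff_forall_notMem.2 fun w hw => hv hw.2.1
  rw [← h2, ← h]
  exact even_two_mul _

/-- A component on `n` vertices has degree sum at most `n (n - 1)`. -/
lemma comp_edges_le {V : Type*} [Fintype V] (H : SimpleGraph V)
    (c : H.ConnectedComponent) [DecidablePred fun v => H.connectedComponentMk v = c] :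
    ∑ v with H.connectedComponentMk v = c, (H.neighborSet v).ncard
      ≤ #{v | H.connectedComponentMk v = c} * (#{v | H.connectedComponentMk v = c} - 1) := by
  classical
  rw [← smul_eq_mul]
  refine Finset.sum_le_card_nsmul _ _ _ fun v hv => ?_
  rw [← Finset.card_erase_of_mem hv, ← Set.ncard_coe_finset]
  refine Set.ncard_le_ncard (fun w hw => ?_) (Set.toFinite _)
  have hvw : H.Adj v w := hw
  simp only [coe_erase, coe_filter, mem_univ, true_and, Set.mem_sdiff, Set.mem_ofPred_eq,
    Set.mem_singleton_iff]
  simp only [mem_filter, mem_univ, true_and] at hv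
  exact ⟨(SimpleGraph.ConnectedComponent.connectedComponentMk_eq_of_adj hvw).symm.trans hv,
    hvw.ne'⟩

/-- If the components of `H` are not all of the connected graph `G`, then some vertex of each
component has an edge of `G` outside `H`. -/
lemma comp_edges_lt {V : Type*} [Fintype V] {G H : SimpleGraph V} (hG : G.Connected)
    (hle : H ≤ G) {k : ℕ}
    (hdeg : ∀ v, (G.neighborSet v).ncard ≤ k) (c : H.ConnectedComponent)
    [DecidablePred fun v => H.connectedComponentMk v = c]
    (hnt : Nontrivial H.ConnectedComponent) :
    ∑ v with H.connectedComponentMk v = c, (H.neighborSet v).ncard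
      < k * #{v | H.connectedComponentMk v = c} := by
  have hsub : ∀ v, H.neighborSet v ⊆ G.neighborSet v := fun v w hw => hle hw
  obtain ⟨u, rfl⟩ := c.exists_rep
  obtain ⟨c', hc'⟩ := exists_ne (H.connectedComponentMk u)
  obtain ⟨w, rfl⟩ := c'.exists_rep
  obtain ⟨p⟩ := hG.preconnected u w
  obtain ⟨d, -, hd1, hd2⟩ := p.exists_boundary_dart
    {v | H.connectedComponentMk v = H.connectedComponentMk u} rfl hc'
  rw [mul_comm, ← smul_eq_mul, ← Finset.sum_const]
  refine Finset.sum_lt_sum (fun v _ => (Set.ncard_le_ncard (hsub v) (Set.toFinite _)).trans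
    (hdeg v)) ⟨d.fst, ?_, ?_⟩
  · simp only [mem_filter, mem_univ, true_and]; exact hd1
  · refine (Set.ncard_lt_ncard ?_ (Set.toFinite _)).trans_le (hdeg d.fst)
    refine ⟨hsub _, fun h => hd2 ?_⟩
    have : H.Adj d.fst d.snd := h d.adj
    change H.connectedComponentMk d.snd = _
    rw [← SimpleGraph.ConnectedComponent.connectedComponentMk_eq_of_adj this]
    exact hd1

/-- The contribution of a component with `d` vertices and degree sum `e` to the first inequality of
`bounds`. It is sharp for odd `d` at `d = 1` and at `d = k + 1`, and there the bounds `e ≤ d (d - 1)`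
and `e ≤ k d - 2` respectively are the ones to use. -/
lemma numeric1 {k d e : ℤ} (hk : 4 ≤ k) (hke : Even k) (hd : 1 ≤ d)
    (h1 : e ≤ d * (d - 1)) (h2 : e ≤ k * d - 2) :
    -2 ≤ k * (k + 1) * (d - d % 2) - 2 * d - k * e := by
  rcases Int.emod_two_eq_zero_or_one d with h | h
  · rw [h]
    nlinarith [mul_le_mul_of_nonneg_left h2 (by linarith : (0:ℤ) ≤ k),
      mul_nonneg (by linarith : (0:ℤ) ≤ k - 2) (by linarith : 0 ≤ d)]
  · rw [h]
    obtain ⟨r, rfl⟩ := hke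
    rcases lt_trichotomy d (r + r + 1) with hlt | heq | hgt
    · have : d ≤ r + r - 1 := by omega
      nlinarith [mul_le_mul_of_nonneg_left h1 (by linarith : (0:ℤ) ≤ r + r),
        mul_nonneg (mul_nonneg (by linarith : (0:ℤ) ≤ r) (by linarith : 0 ≤ d - 1))
          (by linarith : 0 ≤ r + r - 1 - d)]
    · subst heq
      nlinarith [mul_le_mul_of_nonneg_left h2 (by linarith : (0:ℤ) ≤ r + r)]
    · have : r + r + 3 ≤ d := by omega
      nlinarith [mul_le_mul_of_nonneg_left h2 (by linarith : (0:ℤ) ≤ r + r),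
        mul_nonneg (by linarith : (0:ℤ) ≤ r + r - 2) (by linarith : 0 ≤ d - (r + r + 3))]

/-- The contribution of a component avoiding `S`, with `d` vertices and degree sum `e`, to the second
inequality of `bounds`. Among odd `d`, it is sharp at `d = k + 1`. -/
lemma numeric2 {k d e : ℤ} (hk : 4 ≤ k) (hke : Even k) (hd : 1 ≤ d)
    (h1 : e ≤ d * (d - 1)) (h2 : e ≤ k * d - 2) :
    0 ≤ (k ^ 2 + k + 2) * (d - d % 2) + 2 * (k - 2) * d - (k + 2) * e := by
  rcases Int.emod_two_eq_zero_or_one d with h | h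
  · rw [h]
    nlinarith [mul_le_mul_of_nonneg_left h2 (by linarith : (0:ℤ) ≤ k + 2),
      mul_nonneg (by linarith : (0:ℤ) ≤ k - 2) (by linarith : 0 ≤ d)]
  · rw [h]
    obtain ⟨r, rfl⟩ := hke
    rcases lt_trichotomy d (r + r + 1) with hlt | heq | hgt
    · have : d ≤ r + r - 1 := by omega
      nlinarith [mul_le_mul_of_nonneg_left h1 (by linarith : (0:ℤ) ≤ r + r + 2),
        mul_nonneg (mul_nonneg (by linarith : (0:ℤ) ≤ r + r + 2) (by linarith : 0 ≤ d - 1))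
          (by linarith : 0 ≤ r + r - 1 - d)]
    · subst heq
      nlinarith [mul_le_mul_of_nonneg_left h2 (by linarith : (0:ℤ) ≤ r + r + 2)]
    · have : r + r + 3 ≤ d := by omega
      nlinarith [mul_le_mul_of_nonneg_left h2 (by linarith : (0:ℤ) ≤ r + r + 2),
        mul_nonneg (by linarith : (0:ℤ) ≤ r + r - 2) (by linarith : 0 ≤ d - (r + r + 3))]

/-- The two extreme pairs are `k`-good, with denominators cleared. Both inequalities come from adding
up the component-wise estimates for `cut G S`, with `S` as in `tutte_berge`; the first one also
uses `card_comp_le`. -/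
lemma bounds {V : Type*} [Finite V] {G : SimpleGraph V} (hG : G.Connected) {k : ℕ} (hk : 4 ≤ k)
    (hke : Even k) (hdeg : ∀ v, (G.neighborSet v).ncard ≤ k) :
    2 * (Nat.card V : ℤ) + 2 * k * G.edgeSet.ncard
      ≤ 2 * k * (k + 1) * matchingNumber G + (2 + 2 * k + k * (k + 1)) ∧
    2 * (k + 2 : ℤ) * G.edgeSet.ncard - 2 * (k - 2) * Nat.card V
      ≤ 2 * (k ^ 2 + k + 2) * matchingNumber G + (k ^ 2 + k + 2 + 2 * (k + 2)) := by
  classical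
  have := Fintype.ofFinite V
  obtain ⟨S, hTB⟩ := tutte_berge G
  set H := cut G S with hH
  have := Fintype.ofFinite H.ConnectedComponent
  have hle : H ≤ G := cut_le G S
  have hC := card_comp_le hG hle
  have hX := edges_cut hdeg S
  rw [← hH] at hX
  set d : H.ConnectedComponent → ℤ := fun c => (#{v | H.connectedComponentMk v = c} : ℕ) with hd
  set e : H.ConnectedComponent → ℤ := fun c =>
    ((∑ v with H.connectedComponentMk v = c, (H.neighborSet v).ncard : ℕ) : ℤ) with he
  set σ : H.ConnectedComponent → ℤ := fun c =>
    ((∑ v with H.connectedComponentMk v = c, (if v ∈ S then 1 else 0) : ℕ) : ℤ) with hσ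
  have hkd : ∀ c, e c ≤ k * d c := by
    intro c
    have : ∑ v with H.connectedComponentMk v = c, (H.neighborSet v).ncard
        ≤ #{v | H.connectedComponentMk v = c} • k :=
      Finset.sum_le_card_nsmul _ _ _ fun v _ =>
        (Set.ncard_le_ncard (fun w hw => hle hw) (Set.toFinite _)).trans (hdeg v)
    rw [smul_eq_mul, mul_comm] at this
    simp only [he, hd]; exact_mod_cast this
  -- `t` is the indicator of `H` being connected: only then may a component be `k`-regular in `H`.
  obtain ⟨t, ht0, htC, ht⟩ : ∃ t : ℤ, 0 ≤ t ∧ t * Nat.card H.ConnectedComponent ≤ 1 ∧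
      ∀ c, e c - 2 * t ≤ k * d c - 2 := by
    rcases subsingleton_or_nontrivial H.ConnectedComponent with h | h
    · refine ⟨1, by norm_num, ?_, fun c => ?_⟩
      · have := Finite.card_le_one_iff_subsingleton.2 h
        omega
      · have h' := hkd c
        linarith
    · refine ⟨0, le_rfl, by simp, fun c => ?_⟩
      have h1 := comp_edges_lt hG hle hdeg c h
      have h2 := comp_edges_even H c
      have h3 : Even (k * #{v | H.connectedComponentMk v = c}) := hke.mul_right _
      have h4 : (∑ v with H.connectedComponentMk v = c, (H.neighborSet v).ncard) + 2
          ≤ k * #{v | H.connectedComponentMk v = c} := by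
        rcases h2 with ⟨a, ha⟩; rcases h3 with ⟨b, hb⟩
        omega
      have : e c + 2 ≤ k * d c := by simp only [he, hd]; exact_mod_cast h4
      linarith
  have hd1 : ∀ c, 1 ≤ d c := by
    intro c
    obtain ⟨v, hv⟩ := c.exists_rep
    have : 0 < #{v | H.connectedComponentMk v = c} :=
      Finset.card_pos.2 ⟨v, by simp only [mem_filter, mem_univ, true_and]; exact hv⟩
    simp only [hd]; exact_mod_cast this
  have hd2 : ∀ c, e c - 2 * t ≤ d c * (d c - 1) := by
    intro c
    have h1 := comp_edges_le H c
    have h2 : 1 ≤ #{v | H.connectedComponentMk v = c} := by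
      have := hd1 c; simp only [hd] at this; exact_mod_cast this
    zify [h2] at h1
    have : e c ≤ d c * (d c - 1) := by simpa only [he, hd, Nat.cast_sum] using h1
    linarith
  have sumd : ∑ c, d c = Nat.card V := by
    simp only [hd, ← Nat.cast_sum]
    simp only [Finset.card_eq_sum_ones]
    rw [sum_fibers, ← Finset.card_eq_sum_ones, Nat.card_eq_fintype_card, Finset.card_univ]
  have sume : ∑ c, e c = 2 * H.edgeSet.ncard := by
    simp only [he, ← Nat.cast_sum]
    rw [sum_fibers, ← two_mul_edges]
    push_cast; ring
  have sumσ : ∑ c, σ c = S.ncard := by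
    simp only [hσ, ← Nat.cast_sum]
    rw [sum_fibers, Set.ncard_eq_toFinset_card', ← Finset.sum_filter,
      Finset.card_eq_sum_ones]
    congr 2
    ext; simp
  have sumo : ∑ c, d c % 2 = H.oddComponents.ncard := by
    have : ∀ c, d c % 2 = if Odd (Set.ncard c.supp) then 1 else 0 := by
      intro c
      have : d c = Set.ncard c.supp := by
        rw [Set.ncard_eq_toFinset_card']
        simp only [hd]
        congr 2
        ext; simp
      rw [this]
      split_ifs with h
      · obtain ⟨r, hr⟩ := h; omega
      · obtain ⟨r, hr⟩ := Nat.not_odd_iff_even.1 h; omega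
    rw [Finset.sum_congr rfl fun c _ => this c, Finset.sum_boole, Set.ncard_eq_toFinset_card']
    congr 2
    ext; simp
  have cardC : (Nat.card H.ConnectedComponent : ℤ) = ∑ _c : H.ConnectedComponent, 1 := by
    simp [Nat.card_eq_fintype_card]
  have hk' : (4 : ℤ) ≤ k := by exact_mod_cast hk
  have hke' : Even (k : ℤ) := by exact_mod_cast hke
  have n1 : ∑ c, (-2 : ℤ) ≤ ∑ c, (k * (k + 1) * (d c - d c % 2) - 2 * d c - k * (e c - 2 * t)) :=
    Finset.sum_le_sum fun c _ => numeric1 hk' hke' (hd1 c) (hd2 c) (ht c)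
  have n2 : ∑ c : H.ConnectedComponent, (0 : ℤ)
      ≤ ∑ c, (((k : ℤ) ^ 2 + k + 2) * (d c - d c % 2) + 2 * (k - 2) * (d c - σ c)
        - (k + 2) * (e c - 2 * t)) := by
    refine Finset.sum_le_sum fun c _ => ?_
    by_cases hc : ∃ v ∈ S, H.connectedComponentMk v = c
    · obtain ⟨v, hv, rfl⟩ := hc
      have hfil : (univ.filter fun w => H.connectedComponentMk w = H.connectedComponentMk v)
          = {v} := by
        ext w
        simp only [mem_filter, mem_univ, true_and, mem_singleton]
        exact cut_supp hv w
      have e1 : d (H.connectedComponentMk v) = 1 := by simp only [hd, hfil]; simp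
      have e2 : σ (H.connectedComponentMk v) = 1 := by
        simp only [hσ, hfil, Finset.sum_singleton, if_pos hv]; simp
      have e3 := hd2 (H.connectedComponentMk v)
      rw [e1] at e3 ⊢
      rw [e2]
      have e4 : (1 : ℤ) % 2 = 1 := rfl
      rw [e4]
      nlinarith
    · have e2 : σ c = 0 := by
        simp only [hσ]
        norm_cast
        refine Finset.sum_eq_zero fun v hv => ?_
        rw [if_neg]
        intro hvS
        exact hc ⟨v, hvS, by simpa using hv⟩
      rw [e2]
      have := numeric2 hk' hke' (hd1 c) (hd2 c) (ht c)
      linarith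
  simp only [Finset.sum_sub_distrib, Finset.sum_add_distrib, ← Finset.mul_sum, Finset.sum_const,
    Finset.card_univ, ← Nat.card_eq_fintype_card, nsmul_eq_mul, sumd, sume, sumσ, sumo] at n1 n2
  set C := Nat.card H.ConnectedComponent
  zify at hC hX hTB
  constructor
  · nlinarith [mul_le_mul_of_nonneg_left hTB (by positivity : (0:ℤ) ≤ k * (k + 1)),
      mul_le_mul_of_nonneg_left hX (by positivity : (0:ℤ) ≤ k + 1),
      mul_le_mul_of_nonneg_left htC (by positivity : (0:ℤ) ≤ k)]
  · nlinarith [mul_le_mul_of_nonneg_left hTB (by positivity : (0:ℤ) ≤ k ^ 2 + k + 2),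
      mul_le_mul_of_nonneg_left hX (by positivity : (0:ℤ) ≤ k + 2),
      mul_le_mul_of_nonneg_left htC (by positivity : (0:ℤ) ≤ k + 2)]

/-! ### Chains of gadgets -/

/-- Hub `i` is joined to port `t₀` of each of the `L` gadgets in block `i`, and to port `t₁` of the
first `p` gadgets in block `i - 1`. -/
def Att {N L r : ℕ} (p : ℕ) (t₀ t₁ : Fin r) (i : Fin (N + 1)) (x : Fin N × Fin L × Fin r) : Prop :=
  (x.2.2 = t₀ ∧ i = x.1.castSucc) ∨ ((x.2.2 = t₁ ∧ x.2.1.val < p) ∧ i = x.1.succ)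

/-- Adjacency of `chain`. -/
def ChainAdj (N : ℕ) {L r : ℕ} (p : ℕ) (I : SimpleGraph (Fin r)) (t₀ t₁ : Fin r) :
    Fin (N + 1) ⊕ (Fin N × Fin L × Fin r) → Fin (N + 1) ⊕ (Fin N × Fin L × Fin r) → Prop
  | .inl _, .inl _ => False
  | .inl i, .inr x => Att p t₀ t₁ i x
  | .inr x, .inl i => Att p t₀ t₁ i x
  | .inr x, .inr y => x.1 = y.1 ∧ x.2.1 = y.2.1 ∧ I.Adj x.2.2 y.2.2

/-- A chain of `N + 1` hubs (the `inl` vertices), consecutive ones being linked by a block of `L`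
disjoint copies of the gadget `I`; every gadget of block `i` hangs on hub `i`, and the first `p`
of them are also attached to hub `i + 1`. -/
def chain (N L : ℕ) {r : ℕ} (p : ℕ) (I : SimpleGraph (Fin r)) (t₀ t₁ : Fin r) :
    SimpleGraph (Fin (N + 1) ⊕ (Fin N × Fin L × Fin r)) where
  Adj := ChainAdj N p I t₀ t₁
  symm := ⟨by
    rintro (i | x) (j | y) h
    · exact h
    · exact h
    · exact h
    · exact ⟨h.1.symm, h.2.1.symm, h.2.2.symm⟩⟩
  loopless := ⟨by
    rintro (i | x) h
    · exact h
    · exact h.2.2.ne rfl⟩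

section
variable {N L r p : ℕ} {I : SimpleGraph (Fin r)} {t₀ t₁ : Fin r}

open Classical in
lemma deg_eq_sum {V : Type*} [Fintype V] (G : SimpleGraph V) (v : V) :
    (G.neighborSet v).ncard = ∑ w, if G.Adj v w then 1 else 0 := by
  rw [Finset.sum_boole, Set.ncard_eq_toFinset_card']
  simp only [Nat.cast_id]
  congr 1
  ext; simp

open Classical in
lemma att_ite (i : Fin (N + 1)) (x : Fin N × Fin L × Fin r) :
    (if Att p t₀ t₁ i x then 1 else 0 : ℕ) =
      (if x.2.2 = t₀ then (if i = x.1.castSucc then 1 else 0) else 0) +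
      (if x.2.2 = t₁ ∧ x.2.1.val < p then (if i = x.1.succ then 1 else 0) else 0) := by
  have hne : x.1.castSucc ≠ x.1.succ := (Fin.castSucc_lt_succ (i := x.1)).ne
  unfold Att
  by_cases h1 : i = x.1.castSucc
  · have h2 : i ≠ x.1.succ := h1 ▸ hne
    simp [h1, hne]
  · simp [h1, ite_and]

open Classical in
lemma sum_att_hub (x : Fin N × Fin L × Fin r) :
    ∑ i, (if Att p t₀ t₁ i x then 1 else 0 : ℕ) =
      (if x.2.2 = t₀ then 1 else 0) + (if x.2.2 = t₁ ∧ x.2.1.val < p then 1 else 0) := by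
  simp only [att_ite, Finset.sum_add_distrib]
  congr 1
  · split_ifs <;> simp
  · split_ifs <;> simp

lemma sum_lt (hp : p ≤ L) : ∑ l : Fin L, (if l.val < p then 1 else 0 : ℕ) = p := by
  rw [Fin.sum_univ_eq_sum_range (fun l => if l < p then 1 else 0) L, Finset.sum_boole]
  have : (Finset.range L).filter (fun l => l < p) = Finset.range p := by
    ext; simp; omega
  rw [this]; simp

open Classical in
lemma sum_att_gadget_le (hp : p ≤ L) (i : Fin (N + 1)) :
    ∑ x : Fin N × Fin L × Fin r, (if Att p t₀ t₁ i x then 1 else 0 : ℕ) ≤ L + p := by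
  simp only [att_ite, Finset.sum_add_distrib, Fintype.sum_prod_type]
  have e1 : ∀ f : Fin N → Fin (N + 1), Function.Injective f →
      ∑ j, (if i = f j then 1 else 0 : ℕ) ≤ 1 := by
    intro f hf
    rw [Finset.sum_boole]
    simp only [Nat.cast_id]
    rw [Finset.card_le_one]
    intro a ha b hb
    simp only [mem_filter, mem_univ, true_and] at ha hb
    exact hf (ha.symm.trans hb)
  refine add_le_add ?_ ?_
  · have : ∀ j : Fin N, ∑ _l : Fin L, ∑ t : Fin r,
        (if t = t₀ then (if i = j.castSucc then 1 else 0) else 0 : ℕ)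
        = L * (if i = j.castSucc then 1 else 0) := by
      intro j
      simp
    simp only [this, ← Finset.mul_sum]
    exact (Nat.mul_le_mul_left L (e1 _ (Fin.castSucc_injective N))).trans (by simp)
  · have : ∀ (j : Fin N) (l : Fin L), ∑ t : Fin r,
        (if t = t₁ ∧ l.val < p then (if i = j.succ then 1 else 0) else 0 : ℕ)
        = (if l.val < p then 1 else 0) * (if i = j.succ then 1 else 0) := by
      intro j l
      by_cases hl : l.val < p <;> simp [hl]
    simp only [this, ← Finset.sum_mul, sum_lt hp, ← Finset.mul_sum]
    exact (Nat.mul_le_mul_left p (e1 _ (Fin.succ_injective N))).trans (by simp)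

open Classical in
lemma deg_hub (i : Fin (N + 1)) :
    ((chain N L p I t₀ t₁).neighborSet (Sum.inl i)).ncard
      = ∑ x : Fin N × Fin L × Fin r, (if Att p t₀ t₁ i x then 1 else 0 : ℕ) := by
  rw [deg_eq_sum, Fintype.sum_sum_type]
  have h1 : ∀ j, ¬ (chain N L p I t₀ t₁).Adj (Sum.inl i) (Sum.inl j) := fun j h => h
  have h2 : ∀ x, (chain N L p I t₀ t₁).Adj (Sum.inl i) (Sum.inr x) ↔ Att p t₀ t₁ i x :=
    fun x => Iff.rfl
  simp [h1, h2]

open Classical in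
lemma deg_gadget (x : Fin N × Fin L × Fin r) :
    ((chain N L p I t₀ t₁).neighborSet (Sum.inr x)).ncard
      = ∑ i, (if Att p t₀ t₁ i x then 1 else 0 : ℕ) + (I.neighborSet x.2.2).ncard := by
  rw [deg_eq_sum, deg_eq_sum, Fintype.sum_sum_type]
  have h1 : ∀ y, (chain N L p I t₀ t₁).Adj (Sum.inr x) (Sum.inr y) ↔
    (x.1 = y.1 ∧ x.2.1 = y.2.1 ∧ I.Adj x.2.2 y.2.2) := fun j => Iff.rfl
  have h2 : ∀ i, (chain N L p I t₀ t₁).Adj (Sum.inr x) (Sum.inl i) ↔ Att p t₀ t₁ i x :=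
    fun x => Iff.rfl
  simp only [h1, h2]
  congr 1
  simp only [Fintype.sum_prod_type, ite_and]
  rw [Finset.sum_eq_single x.1 (fun b _ hb => by simp [hb.symm]) (by simp),
    Finset.sum_eq_single x.2.1 (fun b _ hb => by simp [hb.symm]) (by simp)]
  simp

lemma chain_deg {k : ℕ} (hp : p ≤ L) (hL : L + p ≤ k)
    (hI : ∀ t, (I.neighborSet t).ncard + (if t = t₀ then 1 else 0) + (if t = t₁ then 1 else 0) ≤ k) :
    ∀ v, ((chain N L p I t₀ t₁).neighborSet v).ncard ≤ k := by
  classical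
  rintro (i | x)
  · rw [deg_hub]
    exact (sum_att_gadget_le hp i).trans hL
  · rw [deg_gadget, sum_att_hub]
    refine le_trans ?_ (hI x.2.2)
    have : (if x.2.2 = t₁ ∧ x.2.1.val < p then 1 else 0) ≤ (if x.2.2 = t₁ then 1 else 0) := by
      by_cases h : x.2.2 = t₁ <;> by_cases h' : x.2.1.val < p <;> simp [h, h']
    omega

lemma chain_edges (hp : p ≤ L) :
    (chain N L p I t₀ t₁).edgeSet.ncard = N * (L + p + L * I.edgeSet.ncard) := by
  classical
  have h := two_mul_edges (chain N L p I t₀ t₁)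
  have hI := two_mul_edges I
  rw [Fintype.sum_sum_type] at h
  simp only [deg_hub, deg_gadget, Finset.sum_add_distrib] at h
  rw [Finset.sum_comm] at h
  have e1 : ∑ x : Fin N × Fin L × Fin r, ∑ i, (if Att p t₀ t₁ i x then 1 else 0 : ℕ)
      = N * (L + p) := by
    simp only [sum_att_hub, Fintype.sum_prod_type, Finset.sum_add_distrib]
    have : ∀ l : Fin L, ∑ t : Fin r, (if t = t₁ ∧ l.val < p then 1 else 0 : ℕ)
        = (if l.val < p then 1 else 0) := by
      intro l
      by_cases hl : l.val < p <;> simp [hl]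
    simp only [this, sum_lt hp]
    simp [mul_add]
  have e2 : ∑ x : Fin N × Fin L × Fin r, (I.neighborSet x.2.2).ncard
      = N * (L * (2 * I.edgeSet.ncard)) := by
    simp only [Fintype.sum_prod_type, ← hI]
    simp
  rw [e1, e2] at h
  nlinarith

lemma chain_connected (hp0 : 0 < p) (hp : p ≤ L) (hI : I.Preconnected) :
    (chain N L p I t₀ t₁).Connected := by
  have hgad : ∀ (i : Fin N) (l : Fin L) (s t : Fin r), (chain N L p I t₀ t₁).Reachable
      (Sum.inr (i, l, s)) (Sum.inr (i, l, t)) := by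
    intro i l s t
    let φ : I →g chain N L p I t₀ t₁ := ⟨fun t => Sum.inr (i, l, t), fun h => ⟨rfl, rfl, h⟩⟩
    exact (hI s t).map φ
  have hleft : ∀ (i : Fin N) (l : Fin L) (t : Fin r), (chain N L p I t₀ t₁).Reachable
      (Sum.inl i.castSucc) (Sum.inr (i, l, t)) := by
    intro i l t
    refine SimpleGraph.Reachable.trans (SimpleGraph.Adj.reachable ?_) (hgad i l t₀ t)
    exact Or.inl ⟨rfl, rfl⟩
  have hhub : ∀ i : Fin (N + 1), (chain N L p I t₀ t₁).Reachable (Sum.inl 0) (Sum.inl i) := by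
    intro i
    induction i using Fin.induction with
    | zero => exact SimpleGraph.Reachable.refl _
    | succ i ih =>
      refine ih.trans ((hleft i ⟨0, hp0.trans_le hp⟩ t₁).trans (SimpleGraph.Adj.reachable ?_))
      exact Or.inr ⟨⟨rfl, hp0⟩, rfl⟩
  rw [SimpleGraph.connected_iff_exists_forall_reachable]
  refine ⟨Sum.inl 0, ?_⟩
  rintro (i | ⟨i, l, t⟩)
  · exact hhub i
  · exact (hhub _).trans (hleft i l t)

/-- Every edge of a matching either meets a hub or lies inside one gadget, which has `r` vertices
and hence at most `r / 2` matching edges. -/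
lemma chain_matching :
    matchingNumber (chain N L p I t₀ t₁) ≤ (N + 1) + N * L * (r / 2) := by
  classical
  refine matchingNumber_le fun M hM => ?_
  -- `Mc c` is the part of the matching inside the gadget `c`.
  let Mc : Fin N × Fin L → (chain N L p I t₀ t₁).Subgraph := fun c =>
    { verts := {v | ∃ s t, v = Sum.inr (c.1, c.2, s) ∧ M.Adj v (Sum.inr (c.1, c.2, t))}
      Adj := fun u v => (∃ s, u = Sum.inr (c.1, c.2, s)) ∧ (∃ t, v = Sum.inr (c.1, c.2, t)) ∧ M.Adj u v
      adj_sub := fun h => M.adj_sub h.2.2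
      edge_vert := by
        rintro u v ⟨⟨s, rfl⟩, ⟨t, rfl⟩, h⟩
        exact ⟨s, t, rfl, h⟩
      symm := ⟨fun _ _ h => ⟨h.2.1, h.1, h.2.2.symm⟩⟩ }
  have hMc : ∀ c, (Mc c).edgeSet.ncard ≤ r / 2 := by
    intro c
    have hm : (Mc c).IsMatching := by
      rintro v ⟨s, t, rfl, h⟩
      exact ⟨_, ⟨⟨s, rfl⟩, ⟨t, rfl⟩, h⟩, fun y hy => hM.eq_of_adj_left hy.2.2 h⟩
    have h1 := two_mul_matching hm
    have h2 : (Mc c).verts ⊆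
        (fun s : Fin r => (Sum.inr (c.1, c.2, s) : Fin (N + 1) ⊕ (Fin N × Fin L × Fin r))) ''
          Set.univ := by
      rintro v ⟨s, t, rfl, h⟩
      exact ⟨s, trivial, rfl⟩
    have h3 := (Set.ncard_le_ncard h2 (Set.toFinite _)).trans (Set.ncard_image_le (Set.toFinite _))
    rw [Set.ncard_univ, Nat.card_fin] at h3
    omega
  -- `f i` is the partner of hub `i`, with a junk value at unmatched hubs.
  have hpart : ∀ i : Fin (N + 1), ∃ w, ∀ w', M.Adj (Sum.inl i) w' → w' = w := by
    intro i
    by_cases h : ∃ w, M.Adj (Sum.inl i) w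
    · obtain ⟨w, hw⟩ := h
      exact ⟨w, fun w' hw' => hM.eq_of_adj_left hw' hw⟩
    · exact ⟨Sum.inl i, fun w' hw' => absurd ⟨w', hw'⟩ h⟩
  choose f hf using hpart
  let E : Finset (Sym2 (Fin (N + 1) ⊕ (Fin N × Fin L × Fin r))) :=
    (univ.image fun i => s(Sum.inl i, f i)) ∪ univ.biUnion fun c => (Mc c).edgeSet.toFinset
  have hE : M.edgeSet ⊆ (E : Set _) := by
    intro e
    induction e using Sym2.ind with | _ u v
    intro h
    have huv : M.Adj u v := h
    simp only [E, Finset.coe_union, Set.mem_union, Finset.mem_coe, Finset.mem_image,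
      Finset.mem_biUnion, Finset.mem_univ, true_and, Set.mem_toFinset]
    rcases u with i | x
    · exact Or.inl ⟨i, by rw [hf i _ huv]⟩
    · rcases v with j | y
      · exact Or.inl ⟨j, by rw [← hf j _ huv.symm, Sym2.eq_swap]⟩
      · refine Or.inr ⟨(x.1, x.2.1), ?_⟩
        obtain ⟨h1, h2, -⟩ := M.adj_sub huv
        refine ⟨⟨x.2.2, rfl⟩, ⟨y.2.2, ?_⟩, huv⟩
        rw [h1, h2]
  refine (Set.ncard_le_ncard hE (Set.toFinite _)).trans ?_
  rw [Set.ncard_coe_finset]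
  refine (Finset.card_union_le _ _).trans (add_le_add ?_ ?_)
  · exact Finset.card_image_le.trans (by simp)
  · refine (Finset.card_biUnion_le_card_mul _ _ (r / 2) fun c _ => ?_).trans (by simp)
    rw [← Set.ncard_eq_toFinset_card']
    exact hMc c

end

/-- Letting the number of hubs tend to infinity in `chain` yields a necessary condition. -/
lemma necessary {k L p r : ℕ} {I : SimpleGraph (Fin r)} {t₀ t₁ : Fin r} {a b : ℝ}
    (hp0 : 0 < p) (hp : p ≤ L) (hL : L + p ≤ k) (hconn : I.Preconnected)
    (hI : ∀ t, (I.neighborSet t).ncard + (if t = t₀ then 1 else 0) + (if t = t₁ then 1 else 0) ≤ k)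
    (h : kGood k a b) :
    a * (1 + L * r) + b * (L + p + L * I.edgeSet.ncard) ≤ 1 + L * (r / 2 : ℕ) := by
  obtain ⟨T, hT⟩ := h
  by_contra hlt
  push Not at hlt
  set δ := a * (1 + L * r) + b * (L + p + L * I.edgeSet.ncard) - (1 + L * (r / 2 : ℕ)) with hδ
  have hpos : 0 < δ := by linarith
  obtain ⟨N, hN⟩ := exists_nat_gt ((T + 1 - a) / δ)
  rw [div_lt_iff₀ hpos] at hN
  have h1 := hT _ (chain N L p I t₀ t₁) inferInstance (chain_connected hp0 hp hconn)
    (chain_deg hp hL hI)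
  have h2 : (matchingNumber (chain N L p I t₀ t₁) : ℝ) ≤ (N + 1) + N * L * (r / 2 : ℕ) := by
    exact_mod_cast chain_matching
  rw [chain_edges hp, Nat.card_sum, Nat.card_prod, Nat.card_prod] at h1
  simp only [Nat.card_fin] at h1
  push_cast at h1 h2
  rw [hδ] at hN
  linarith

/-! ### The gadgets giving the boundary -/

/-- The complete graph on `k + 1` vertices with the edge between its first and last vertex
removed. -/
def nearClique (k : ℕ) : SimpleGraph (Fin (k + 1)) :=
  (⊤ : SimpleGraph (Fin (k + 1))).deleteEdges {s(0, Fin.last k)}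

lemma nearClique_adj {k : ℕ} {u v : Fin (k + 1)} :
    (nearClique k).Adj u v ↔ u ≠ v ∧ s(u, v) ≠ s(0, Fin.last k) := by
  simp [nearClique, SimpleGraph.deleteEdges_adj]

lemma nearClique_edges {k : ℕ} (hk : 0 < k) :
    ((nearClique k).edgeSet.ncard : ℝ) = k * (k + 1) / 2 - 1 := by
  have h0 : (0 : Fin (k + 1)) ≠ Fin.last k := by
    intro h
    have := congrArg Fin.val h
    simp at this
    omega
  have h1 : (⊤ : SimpleGraph (Fin (k + 1))).edgeSet.ncard = (k + 1).choose 2 := by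
    have := SimpleGraph.card_edgeFinset_top_eq_card_choose_two (V := Fin (k + 1))
    rw [Fintype.card_fin] at this
    rw [← this, Set.ncard_eq_toFinset_card', SimpleGraph.edgeFinset]
  have h2 : s(0, Fin.last k) ∈ (⊤ : SimpleGraph (Fin (k + 1))).edgeSet := h0
  have h3 := Set.ncard_sdiff_singleton_add_one h2 (Set.toFinite _)
  rw [h1] at h3
  have h4 : ((⊤ : SimpleGraph (Fin (k + 1))).edgeSet \ {s(0, Fin.last k)}).ncard
      = (nearClique k).edgeSet.ncard := by
    rw [nearClique, SimpleGraph.edgeSet_deleteEdges]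
  rw [h4] at h3
  have h5 : (((k + 1).choose 2 : ℕ) : ℝ) = (k + 1) * k / 2 := by
    rw [Nat.cast_choose_two]
    push_cast
    ring
  have h6 : ((nearClique k).edgeSet.ncard : ℝ) + 1 = ((k + 1).choose 2 : ℕ) := by exact_mod_cast h3
  rw [h5] at h6
  linarith

lemma nearClique_preconnected {k : ℕ} (hk : 2 ≤ k) : (nearClique k).Preconnected := by
  have key : ∀ v, (nearClique k).Reachable ⟨1, by omega⟩ v := by
    intro v
    by_cases hv : ⟨1, by omega⟩ = v
    · rw [hv]
    · refine SimpleGraph.Adj.reachable (nearClique_adj.2 ⟨hv, fun h => ?_⟩)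
      have : (⟨1, by omega⟩ : Fin (k + 1)) ∈ s(0, Fin.last k) := h ▸ Sym2.mem_mk_left _ _
      rw [Sym2.mem_iff] at this
      rcases this with h | h
      · simpa using congrArg Fin.val h
      · have := congrArg Fin.val h
        simp at this
        omega
  exact fun u v => (key u).symm.trans (key v)

/-- The two end vertices of the missing edge have room for one more edge each. -/
lemma nearClique_deg {k : ℕ} (hk : 2 ≤ k) (t : Fin (k + 1)) :
    ((nearClique k).neighborSet t).ncard + (if t = 0 then 1 else 0)
      + (if t = Fin.last k then 1 else 0) ≤ k := by
  have h0 : (0 : Fin (k + 1)) ≠ Fin.last k := by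
    intro h
    have := congrArg Fin.val h
    simp at this
    omega
  have hc : ∀ A : Set (Fin (k + 1)), Disjoint ((nearClique k).neighborSet t) A →
      ((nearClique k).neighborSet t).ncard + A.ncard ≤ k + 1 := by
    intro A hA
    rw [← Set.ncard_union_eq hA (Set.toFinite _) (Set.toFinite _)]
    refine (Set.ncard_le_ncard (Set.subset_univ _) (Set.toFinite _)).trans ?_
    rw [Set.ncard_univ, Nat.card_fin]
  have hpair := Set.ncard_pair h0
  by_cases h1 : t = 0
  · subst h1
    have := hc {0, Fin.last k} (by
      rw [Set.disjoint_left]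
      rintro w hw (rfl | rfl)
      · exact (nearClique_adj.1 hw).1 rfl
      · exact (nearClique_adj.1 hw).2 rfl)
    rw [hpair] at this
    simp only [if_true, if_neg h0]
    omega
  · by_cases h2 : t = Fin.last k
    · subst h2
      have := hc {0, Fin.last k} (by
        rw [Set.disjoint_left]
        rintro w hw (rfl | rfl)
        · exact (nearClique_adj.1 hw).2 Sym2.eq_swap
        · exact (nearClique_adj.1 hw).1 rfl)
      rw [hpair] at this
      simp only [if_true, if_neg h1]
      omega
    · have := hc {t} (by
        rw [Set.disjoint_singleton_right]
        exact fun h => (nearClique_adj.1 h).1 rfl)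
      rw [Set.ncard_singleton] at this
      simp only [if_neg h1, if_neg h2]
      omega

/-- The chain whose gadgets are single vertices, `k - 1` per block, is a tree showing that
`a + b ≤ 1 / k`. -/
lemma necessary_star {k : ℕ} {a b : ℝ} (hk : 2 ≤ k) (h : kGood k a b) : k * (a + b) ≤ 1 := by
  have h1 := necessary (L := k - 1) (p := 1) (r := 1) (I := ⊥) (t₀ := 0) (t₁ := 0) one_pos
    (by omega) (by omega) (fun u v => by rw [Subsingleton.elim u v])
    (fun t => by rw [Subsingleton.elim t 0]; simp; omega) h
  have h2 : ((k - 1 : ℕ) : ℝ) = k - 1 := by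
    rw [Nat.cast_sub (by omega)]; simp
  simp [h2] at h1
  linarith

lemma necessary_nearClique {k L p : ℕ} {a b : ℝ} (hk : 2 ≤ k) (hke : Even k) (hp0 : 0 < p)
    (hp : p ≤ L) (hL : L + p ≤ k) (h : kGood k a b) :
    a * (1 + L * (k + 1)) + b * (L + p + L * (k * (k + 1) / 2 - 1)) ≤ 1 + L * (k / 2) := by
  have h1 := necessary hp0 hp hL (nearClique_preconnected hk) (nearClique_deg hk) h
  rw [nearClique_edges (by omega)] at h1
  have h2 : ((k + 1) / 2 : ℕ) = (k / 2 : ℝ) := by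
    obtain ⟨r, rfl⟩ := hke
    have : (r + r + 1) / 2 = r := by omega
    rw [this]; push_cast; ring
  rw [h2] at h1
  push_cast at h1
  exact h1

/-! ### Good pairs -/

lemma good_mono {k : ℕ} {a b b' : ℝ} (h : kGood k a b) (hb : b' ≤ b) : kGood k a b' := by
  obtain ⟨T, hT⟩ := h
  refine ⟨T, fun V G hV hG hd => le_trans ?_ (hT V G hV hG hd)⟩
  have := mul_le_mul_of_nonneg_right hb (Nat.cast_nonneg (α := ℝ) G.edgeSet.ncard)
  linarith

lemma good_convex {k : ℕ} {a b a' b' t : ℝ} (h : kGood k a b) (h' : kGood k a' b')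
    (h0 : 0 ≤ t) (h1 : t ≤ 1) : kGood k (a + t * (a' - a)) (b + t * (b' - b)) := by
  obtain ⟨T, hT⟩ := h
  obtain ⟨T', hT'⟩ := h'
  refine ⟨T + t * (T' - T), fun V G hV hG hd => ?_⟩
  have e1 := mul_le_mul_of_nonneg_left (hT V G hV hG hd) (by linarith : 0 ≤ 1 - t)
  have e2 := mul_le_mul_of_nonneg_left (hT' V G hV hG hd) h0
  linarith

/-- Since `2 |E| ≤ k |V|`, weight may be moved from vertices to edges at the rate `2 / k`. -/
lemma good_left {k : ℕ} {a b s : ℝ} (hk : 0 < k) (h : kGood k a b) (hs : 0 ≤ s) :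
    kGood k (a - s) (b + 2 * (s / k)) := by
  obtain ⟨T, hT⟩ := h
  refine ⟨T, fun V G hV hG hd => le_trans ?_ (hT V G hV hG hd)⟩
  have := Fintype.ofFinite V
  have h1 : 2 * G.edgeSet.ncard ≤ k * Nat.card V := by
    rw [two_mul_edges, mul_comm, Nat.card_eq_fintype_card, ← Finset.card_univ, ← smul_eq_mul]
    exact Finset.sum_le_card_nsmul _ _ _ fun v _ => hd v
  have h2 : (2 : ℝ) * G.edgeSet.ncard ≤ k * Nat.card V := by exact_mod_cast h1
  have hk' : (0 : ℝ) < k := by exact_mod_cast hk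
  have h3 := mul_le_mul_of_nonneg_left h2 (div_nonneg hs hk'.le)
  have h4 : s / k * (k * (Nat.card V : ℝ)) = s * Nat.card V := by
    field_simp
  rw [h4] at h3
  linarith

/-- Since `|V| ≤ |E| + 1`, weight may be moved from edges to vertices at the rate one. -/
lemma good_right {k : ℕ} {a b s : ℝ} (h : kGood k a b) (hs : 0 ≤ s) :
    kGood k (a + s) (b - s) := by
  obtain ⟨T, hT⟩ := h
  refine ⟨T + s, fun V G hV hG hd => le_trans ?_ (hT V G hV hG hd)⟩
  have h1 := hG.card_vert_le_card_edgeSet_add_one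
  rw [Nat.card_coe_set_eq] at h1
  have h2 : (Nat.card V : ℝ) ≤ G.edgeSet.ncard + 1 := by exact_mod_cast h1
  have h3 := mul_le_mul_of_nonneg_left h2 hs
  linarith

/-- The pair `(a₁*, b₁*)` is `k`-good. -/
lemma good_one {k : ℕ} (hk : 4 ≤ k) (hke : Even k) :
    kGood k (1 / ((k : ℝ) * (k + 1))) (1 / ((k : ℝ) + 1)) := by
  have hk' : (4 : ℝ) ≤ k := by exact_mod_cast hk
  have hpos : (0 : ℝ) < 2 * k * (k + 1) := by positivity
  refine ⟨(2 + 2 * k + k * (k + 1)) / (2 * k * (k + 1)), fun V G hV hG hd => ?_⟩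
  have h1 := (bounds hG hk hke hd).1
  have h2 : 2 * (Nat.card V : ℝ) + 2 * k * G.edgeSet.ncard
      ≤ 2 * k * (k + 1) * matchingNumber G + (2 + 2 * k + k * (k + 1)) := by exact_mod_cast h1
  have h3 : 1 / ((k : ℝ) * (k + 1)) * Nat.card V + 1 / ((k : ℝ) + 1) * G.edgeSet.ncard
      = (2 * (Nat.card V : ℝ) + 2 * k * G.edgeSet.ncard) / (2 * k * (k + 1)) := by
    field_simp
  rw [h3, ← sub_div, div_le_iff₀ hpos]
  linarith

/-- The pair `(a₂*, b₂*)` is `k`-good. -/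
lemma good_two {k : ℕ} (hk : 4 ≤ k) (hke : Even k) :
    kGood k (-(((k : ℝ) - 2) / ((k : ℝ) ^ 2 + k + 2))) (((k : ℝ) + 2) / ((k : ℝ) ^ 2 + k + 2)) := by
  have hpos : (0 : ℝ) < (k : ℝ) ^ 2 + k + 2 := by positivity
  refine ⟨(k ^ 2 + k + 2 + 2 * (k + 2)) / (2 * (k ^ 2 + k + 2)), fun V G hV hG hd => ?_⟩
  have h1 := (bounds hG hk hke hd).2
  have h2 : 2 * (k + 2 : ℝ) * G.edgeSet.ncard - 2 * (k - 2) * Nat.card V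
      ≤ 2 * (k ^ 2 + k + 2) * matchingNumber G + (k ^ 2 + k + 2 + 2 * (k + 2)) := by
    exact_mod_cast h1
  have h3 : -(((k : ℝ) - 2) / ((k : ℝ) ^ 2 + k + 2)) * Nat.card V
        + ((k : ℝ) + 2) / ((k : ℝ) ^ 2 + k + 2) * G.edgeSet.ncard
      = (2 * (k + 2 : ℝ) * G.edgeSet.ncard - 2 * (k - 2) * Nat.card V)
        / (2 * (k ^ 2 + k + 2)) := by
    field_simp
    ring
  rw [h3, ← sub_div, div_le_iff₀ (by positivity)]
  linarith

end MB

theorem stmt_18 (k : ℕ) (hk : 4 ≤ k) (hkeven : Even k) (a b : ℝ) :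
    (a ≤ -(((k : ℝ) - 2) / ((k : ℝ) ^ 2 + (k : ℝ) + 2)) →
      (kGood k a b ↔
        b ≤ ((k : ℝ) + 2) / ((k : ℝ) ^ 2 + (k : ℝ) + 2)
          + 2 * ((-(((k : ℝ) - 2) / ((k : ℝ) ^ 2 + (k : ℝ) + 2)) - a) / (k : ℝ)))) ∧
    (1 / ((k : ℝ) * ((k : ℝ) + 1)) < a →
      (kGood k a b ↔
        b ≤ 1 / ((k : ℝ) + 1) + 1 / ((k : ℝ) * ((k : ℝ) + 1)) - a)) ∧
    (-(((k : ℝ) - 2) / ((k : ℝ) ^ 2 + (k : ℝ) + 2)) < a →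
      a ≤ 1 / ((k : ℝ) * ((k : ℝ) + 1)) →
      (kGood k a b ↔
        b ≤ ((k : ℝ) + 2) / ((k : ℝ) ^ 2 + (k : ℝ) + 2)
          + (1 / ((k : ℝ) + 1) - ((k : ℝ) + 2) / ((k : ℝ) ^ 2 + (k : ℝ) + 2))
            * (a - (-(((k : ℝ) - 2) / ((k : ℝ) ^ 2 + (k : ℝ) + 2))))
            / (1 / ((k : ℝ) * ((k : ℝ) + 1)) - (-(((k : ℝ) - 2) / ((k : ℝ) ^ 2 + (k : ℝ) + 2)))))) := by
  have hk' : (4 : ℝ) ≤ k := by exact_mod_cast hk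
  have hk0 : (0 : ℝ) < k := by linarith
  have hq : (0 : ℝ) < (k : ℝ) ^ 2 + k + 2 := by positivity
  have g1 := MB.good_one hk hkeven
  have g2 := MB.good_two hk hkeven
  refine ⟨fun ha => ⟨fun h => ?_, fun hb => ?_⟩, fun ha => ⟨fun h => ?_, fun hb => ?_⟩,
    fun ha ha' => ⟨fun h => ?_, fun hb => ?_⟩⟩
  · obtain ⟨r, hr⟩ := hkeven
    have h1 := MB.necessary_nearClique (L := r) (p := r) (by omega) ⟨r, hr⟩ (by omega) le_rfl
      (by omega) h
    have hr' : (r : ℝ) = k / 2 := by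
      rw [hr]; push_cast; ring
    rw [hr'] at h1
    have h2 : ((k : ℝ) + 2) / ((k : ℝ) ^ 2 + k + 2)
          + 2 * ((-(((k : ℝ) - 2) / ((k : ℝ) ^ 2 + k + 2)) - a) / k)
        = (((k : ℝ) ^ 2 + 4) / 4 - a * ((k ^ 2 + k + 2) / 2)) / (k * (k ^ 2 + k + 2) / 4) := by
      field_simp
      ring
    rw [h2, le_div_iff₀ (by positivity)]
    linarith
  · have := MB.good_left (by omega) g2 (sub_nonneg.2 ha)
    rw [sub_sub_cancel] at this
    exact MB.good_mono this hb
  · have h1 := MB.necessary_star (by omega) h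
    have h2 : 1 / ((k : ℝ) + 1) + 1 / ((k : ℝ) * ((k : ℝ) + 1)) = 1 / k := by
      field_simp
    rw [h2, le_sub_iff_add_le, le_div_iff₀ hk0]
    linarith
  · have := MB.good_right g1 (sub_nonneg.2 ha.le)
    rw [add_sub_cancel] at this
    exact MB.good_mono this (by linarith)
  · have h1 := MB.necessary_nearClique (L := k - 1) (p := 1) (by omega) hkeven (by omega)
      (by omega) (by omega) h
    rw [Nat.cast_sub (by omega : 1 ≤ k), Nat.cast_one] at h1
    have e1 : 1 / ((k : ℝ) * (k + 1)) * k ^ 2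
        + 1 / ((k : ℝ) + 1) * (k + (k - 1) * (k * (k + 1) / 2 - 1)) = 1 + (k - 1) * (k / 2) := by
      field_simp
      ring
    have e2 : -(((k : ℝ) - 2) / ((k : ℝ) ^ 2 + k + 2)) * k ^ 2
        + ((k : ℝ) + 2) / ((k : ℝ) ^ 2 + k + 2) * (k + (k - 1) * (k * (k + 1) / 2 - 1))
        = 1 + (k - 1) * (k / 2) := by
      field_simp
      ring
    have hE : (0 : ℝ) < k + (k - 1) * (k * (k + 1) / 2 - 1) := by nlinarith
    generalize 1 / ((k : ℝ) * (k + 1)) = a₁ at *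
    generalize -(((k : ℝ) - 2) / ((k : ℝ) ^ 2 + k + 2)) = a₂ at *
    generalize 1 / ((k : ℝ) + 1) = b₁ at *
    generalize ((k : ℝ) + 2) / ((k : ℝ) ^ 2 + k + 2) = b₂ at *
    have hd : 0 < a₁ - a₂ := by linarith
    rw [mul_div_assoc]
    obtain ⟨t, ht⟩ : ∃ t, t = (a - a₂) / (a₁ - a₂) := ⟨_, rfl⟩
    have hat : a = a₂ + t * (a₁ - a₂) := by
      rw [ht]; field_simp; ring
    rw [← ht]
    -- both extreme pairs lie on the line `k² a + E b = R` that bounds the admissible region here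
    refine le_of_mul_le_mul_right ?_ hE
    have hR : a * (k : ℝ) ^ 2 + (b₂ + (b₁ - b₂) * t) * (k + (k - 1) * (k * (k + 1) / 2 - 1))
        = 1 + (k - 1) * (k / 2) := by
      rw [hat]
      linear_combination t * e1 + (1 - t) * e2
    linarith
  · have hd := ha.trans_le ha'
    generalize 1 / ((k : ℝ) * (k + 1)) = a₁ at *
    generalize -(((k : ℝ) - 2) / ((k : ℝ) ^ 2 + k + 2)) = a₂ at *
    have hd' : 0 < a₁ - a₂ := by linarith
    have hc := MB.good_convex g2 g1 (t := (a - a₂) / (a₁ - a₂)) (div_nonneg (by linarith) hd'.le)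
      ((div_le_one hd').2 (by linarith))
    rw [div_mul_cancel₀ _ hd'.ne', add_sub_cancel] at hc
    refine MB.good_mono hc (hb.trans_eq ?_)
    ring
end
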